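/- Let K ≥ 1 be an integer, P a real n×n̄ matrix, and for each k ≤ K let f_k ≥ 1 and S^{k1},…,S^{k n̄} be symmetric f_k×f_k matrices defining S_k[z] = ∑_i z_i S^{ki}, such that z = 0 whenever S_k[z] = 0 for all k; let 𝒯 ⊆ ℝ_{≥0}^K be a nonempty convex compact monotone set containing a point with all coordinates positive. Let A be a symmetric n×n matrix, b ∈ ℝ^n, s > 0, and set Q = PᵀAP, q = Pᵀb, Q_+ = [[Q, q],[qᵀ, 0]]. Then Opt[s] ≤ Opt_*[κ·s] with κ = 2·ln(8·(f_1+⋯+f_K)), where Opt[s] = inf{ s·φ_𝒯(λ[Λ]) + μ : Λ_k ∈ S^{f_k} positive semidefinite, μ ≥ 0, Q_+ ⪯ BlockDiag(∑_k 𝒮_k^*[Λ_k], μ) } and Opt_*[s'] = sup{ xᵀAx + 2bᵀx : x ∈ 𝒳[s'] }. -/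

import Mathlib

open Matrix BigOperators

noncomputable section

/-- The spectratope `𝒳[s]`: image under `z ↦ P z` of the set of `z` such that
`S_k[z]² ⪯ s t_k I` for some `t ∈ 𝒯`, where `S_k[z] = ∑ i z_i S^{ki}`. -/
def spectratope {n nb K : ℕ} (f : Fin K → ℕ) (P : Matrix (Fin n) (Fin nb) ℝ)
    (Smat : (k : Fin K) → Fin nb → Matrix (Fin (f k)) (Fin (f k)) ℝ)
    (T : Set (Fin K → ℝ)) (s : ℝ) : Set (Fin n → ℝ) :=
  {x | ∃ z : Fin nb → ℝ, ∃ t ∈ T, x = P *ᵥ z ∧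
    ∀ k, ((s * t k) • (1 : Matrix (Fin (f k)) (Fin (f k)) ℝ)
            - (∑ i, z i • Smat k i) ^ 2).PosSemidef}

/-- Support function `φ_𝒯(λ) = max_{t ∈ 𝒯} λᵀ t`. -/
def suppFn {K : ℕ} (T : Set (Fin K → ℝ)) (lam : Fin K → ℝ) : ℝ :=
  sSup ((fun t => ∑ k, lam k * t k) '' T)

/-- `𝒮_k^*[Λ]`, the matrix with entries `Tr(Λ (S^{ki} S^{kj} + S^{kj} S^{ki})/2)`. -/
def calSstar {nb fk : ℕ} (Sm : Fin nb → Matrix (Fin fk) (Fin fk) ℝ)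
    (Λ : Matrix (Fin fk) (Fin fk) ℝ) : Matrix (Fin nb) (Fin nb) ℝ :=
  Matrix.of fun i j => (Λ * ((1 / 2 : ℝ) • (Sm i * Sm j + Sm j * Sm i))).trace

/-- `λ[Λ] = (Tr Λ_1, …, Tr Λ_K)`. -/
def lamOf {K : ℕ} {f : Fin K → ℕ}
    (Λ : (k : Fin K) → Matrix (Fin (f k)) (Fin (f k)) ℝ) : Fin K → ℝ :=
  fun k => (Λ k).trace

/-- `Q_+ = [[Q, q],[qᵀ, 0]]`. -/
def qPlus {m : ℕ} (Q : Matrix (Fin m) (Fin m) ℝ) (q : Fin m → ℝ) :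
    Matrix (Fin m ⊕ Unit) (Fin m ⊕ Unit) ℝ :=
  Matrix.fromBlocks Q (Matrix.of fun i _ => q i) (Matrix.of fun _ j => q j) 0

/-- `BlockDiag(M, μ)`. -/
def blockDiagOne {m : ℕ} (M : Matrix (Fin m) (Fin m) ℝ) (μ : ℝ) :
    Matrix (Fin m ⊕ Unit) (Fin m ⊕ Unit) ℝ :=
  Matrix.fromBlocks M 0 0 (Matrix.of fun _ _ => μ)

theorem exists_orthogonal_diagonalization {ι : Type*} [Fintype ι] [DecidableEq ι]
    {A : Matrix ι ι ℝ} (hA : A.IsHermitian) :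
    ∃ (U : Matrix ι ι ℝ) (d : ι → ℝ), Uᵀ * U = 1 ∧ U * Uᵀ = 1 ∧ A = U * diagonal d * Uᵀ := by
  refine ⟨hA.eigenvectorUnitary, hA.eigenvalues, ?_, ?_, ?_⟩
  · have := Unitary.coe_star_mul_self hA.eigenvectorUnitary
    rwa [star_eq_conjTranspose, conjTranspose_eq_transpose_of_trivial] at this
  · have := Unitary.mul_star_self_of_mem hA.eigenvectorUnitary.2
    rwa [star_eq_conjTranspose, conjTranspose_eq_transpose_of_trivial] at this
  · have := hA.spectral_theorem
    rw [Unitary.conjStarAlgAut_apply, star_eq_conjTranspose,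
      conjTranspose_eq_transpose_of_trivial] at this
    exact this

theorem orthogonal_conj_diagonal_pow {ι : Type*} [Fintype ι] [DecidableEq ι]
    {U : Matrix ι ι ℝ} (d : ι → ℝ) (hU : Uᵀ * U = 1) (hU' : U * Uᵀ = 1) (m : ℕ) :
    (U * diagonal d * Uᵀ) ^ m = U * diagonal (fun i => d i ^ m) * Uᵀ := by
  induction m with
  | zero => simp [hU']
  | succ m ih =>
    rw [pow_succ, ih]
    calc U * diagonal (fun i => d i ^ m) * Uᵀ * (U * diagonal d * Uᵀ)
        = U * diagonal (fun i => d i ^ m) * (Uᵀ * U) * diagonal d * Uᵀ := by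
          simp only [Matrix.mul_assoc]
      _ = _ := by
          rw [hU, Matrix.mul_one, Matrix.mul_assoc U, diagonal_mul_diagonal]
          simp only [pow_succ]

theorem trace_orthogonal_conj_diagonal {ι : Type*} [Fintype ι] [DecidableEq ι]
    {U : Matrix ι ι ℝ} (d : ι → ℝ) (hU : Uᵀ * U = 1) :
    (U * diagonal d * Uᵀ).trace = ∑ i, d i := by
  rw [trace_mul_comm, ← Matrix.mul_assoc, hU, Matrix.one_mul, trace_diagonal]

/-- A positive semidefinite real matrix has a Gram factorization. -/
theorem exists_eq_mul_transpose_of_posSemidef {ι : Type*} [Fintype ι] [DecidableEq ι]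
    {A : Matrix ι ι ℝ} (hA : A.PosSemidef) : ∃ R : Matrix ι ι ℝ, A = R * Rᵀ := by
  obtain ⟨U, d, hU, -, h⟩ := exists_orthogonal_diagonalization hA.1
  have hd : ∀ i, 0 ≤ d i := by
    have h1 := hA.conjTranspose_mul_mul_same U
    have h2 : Uᴴ * A * U = diagonal d := by
      rw [conjTranspose_eq_transpose_of_trivial, h]
      calc Uᵀ * (U * diagonal d * Uᵀ) * U = (Uᵀ * U) * diagonal d * (Uᵀ * U) := by
            simp only [Matrix.mul_assoc]
        _ = _ := by simp [hU]
    rw [h2, posSemidef_diagonal_iff] at h1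
    exact h1
  refine ⟨U * diagonal fun i => √(d i), ?_⟩
  rw [transpose_mul, diagonal_transpose, Matrix.mul_assoc, ← Matrix.mul_assoc (diagonal _),
    diagonal_mul_diagonal, ← Matrix.mul_assoc, h]
  simp only [Real.mul_self_sqrt (hd _)]

theorem trace_mul_nonneg_of_posSemidef {ι : Type*} [Fintype ι] [DecidableEq ι]
    {A B : Matrix ι ι ℝ} (hA : A.PosSemidef) (hB : B.PosSemidef) : 0 ≤ (A * B).trace := by
  obtain ⟨R, rfl⟩ := exists_eq_mul_transpose_of_posSemidef hA
  rw [Matrix.mul_assoc, trace_mul_comm]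
  have := (hB.conjTranspose_mul_mul_same R).trace_nonneg
  rwa [conjTranspose_eq_transpose_of_trivial] at this

theorem sum_pow_mul_pow_le (m : ℕ) (hm : Even m) (x y : ℝ) :
    ∑ j ∈ Finset.range (m + 1), x ^ j * y ^ (m - j) ≤ (m + 1) / 2 * (x ^ m + y ^ m) := by
  have key : ∀ j ∈ Finset.range (m + 1),
      x ^ j * y ^ (m - j) + x ^ (m - j) * y ^ j ≤ x ^ m + y ^ m := by
    intro j hj
    have hj' : j ≤ m := Nat.lt_succ_iff.mp (Finset.mem_range.mp hj)
    have hx : |x| ^ m = x ^ m := hm.pow_abs x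
    have hy : |y| ^ m = y ^ m := hm.pow_abs y
    have e1 : x ^ j * y ^ (m - j) ≤ |x| ^ j * |y| ^ (m - j) := by
      rw [← abs_pow, ← abs_pow, ← abs_mul]; exact le_abs_self _
    have e2 : x ^ (m - j) * y ^ j ≤ |x| ^ (m - j) * |y| ^ j := by
      rw [← abs_pow, ← abs_pow, ← abs_mul]; exact le_abs_self _
    have e3 : 0 ≤ (|x| ^ j - |y| ^ j) * (|x| ^ (m - j) - |y| ^ (m - j)) := by
      rcases le_total |x| |y| with h | h
      · exact mul_nonneg_of_nonpos_of_nonpos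
          (sub_nonpos.mpr (pow_le_pow_left₀ (abs_nonneg _) h _))
          (sub_nonpos.mpr (pow_le_pow_left₀ (abs_nonneg _) h _))
      · exact mul_nonneg
          (sub_nonneg.mpr (pow_le_pow_left₀ (abs_nonneg _) h _))
          (sub_nonneg.mpr (pow_le_pow_left₀ (abs_nonneg _) h _))
    have e4 : |x| ^ j * |x| ^ (m - j) = |x| ^ m := by rw [← pow_add, Nat.add_sub_cancel' hj']
    have e5 : |y| ^ j * |y| ^ (m - j) = |y| ^ m := by rw [← pow_add, Nat.add_sub_cancel' hj']
    nlinarith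
  have hrefl : ∑ j ∈ Finset.range (m + 1), x ^ (m - j) * y ^ j
      = ∑ j ∈ Finset.range (m + 1), x ^ j * y ^ (m - j) := by
    rw [← Finset.sum_range_reflect]
    refine Finset.sum_congr rfl fun j hj => ?_
    have hj' : j ≤ m := Nat.lt_succ_iff.mp (Finset.mem_range.mp hj)
    simp only [Nat.add_sub_cancel, Nat.sub_sub_self hj']
  have := Finset.sum_le_sum key
  rw [Finset.sum_add_distrib, hrefl, Finset.sum_const, Finset.card_range, nsmul_eq_mul] at this
  push_cast at this
  linarith

theorem trace_mul_orthogonal_conj_diagonal {ι : Type*} [Fintype ι] [DecidableEq ι]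
    (D U W : Matrix ι ι ℝ) (hD : Dᵀ = D) (x y : ι → ℝ) :
    (D * (U * diagonal x * Uᵀ) * D * (W * diagonal y * Wᵀ)).trace
      = ∑ a, ∑ b, ((Uᵀ * D * W) a b) ^ 2 * (x a * y b) := by
  set C := Uᵀ * D * W with hC
  have hCt : Cᵀ = Wᵀ * D * U := by
    rw [hC, transpose_mul, transpose_mul, transpose_transpose, hD, Matrix.mul_assoc]
  have : (D * (U * diagonal x * Uᵀ) * D * (W * diagonal y * Wᵀ)).trace
      = (Cᵀ * diagonal x * (C * diagonal y)).trace := by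
    rw [hCt, hC]
    rw [show D * (U * diagonal x * Uᵀ) * D * (W * diagonal y * Wᵀ)
      = (D * U * diagonal x * Uᵀ * D * W * diagonal y) * Wᵀ by simp only [Matrix.mul_assoc],
      trace_mul_comm]
    simp only [Matrix.mul_assoc]
  rw [this, trace, Finset.sum_comm]
  refine Finset.sum_congr rfl fun b _ => ?_
  rw [diag_apply, Matrix.mul_apply]
  refine Finset.sum_congr rfl fun a _ => ?_
  rw [mul_diagonal, mul_diagonal, transpose_apply]
  ring

/-- The mean value trace inequality for odd powers. -/
theorem trace_sub_mul_pow_sub_pow_le {ι : Type*} [Fintype ι] [DecidableEq ι]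
    {A B : Matrix ι ι ℝ} (hA : A.IsHermitian) (hB : B.IsHermitian) (m : ℕ) (hm : Even m) :
    ((A - B) * (A ^ (m + 1) - B ^ (m + 1))).trace
      ≤ (m + 1) / 2 * ((A - B) * (A - B) * (A ^ m + B ^ m)).trace := by
  obtain ⟨U, x, hU, hU', hAU⟩ := exists_orthogonal_diagonalization hA
  obtain ⟨W, y, hW, hW', hBW⟩ := exists_orthogonal_diagonalization hB
  have hD : (A - B)ᵀ = A - B := by
    have := hA.sub hB
    rwa [IsHermitian, conjTranspose_eq_transpose_of_trivial] at this
  have hpow : ∀ i j, ((A - B) * A ^ i * (A - B) * B ^ j).trace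
      = ∑ a, ∑ b, ((Uᵀ * (A - B) * W) a b) ^ 2 * (x a ^ i * y b ^ j) := by
    intro i j
    rw [← trace_mul_orthogonal_conj_diagonal _ _ _ hD, ← orthogonal_conj_diagonal_pow _ hU hU',
      ← orthogonal_conj_diagonal_pow _ hW hW', ← hAU, ← hBW]
  have htel : A ^ (m + 1) - B ^ (m + 1)
      = ∑ j ∈ Finset.range (m + 1), A ^ j * (A - B) * B ^ (m - j) := by
    clear hA hB hpow hD hAU hBW hm
    induction m with
    | zero => simp
    | succ m ih =>
      rw [Finset.sum_range_succ, Nat.sub_self, pow_zero, Matrix.mul_one]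
      have : ∀ j ∈ Finset.range (m + 1), A ^ j * (A - B) * B ^ (m + 1 - j)
          = (A ^ j * (A - B) * B ^ (m - j)) * B := by
        intro j hj
        have hj' : j ≤ m := Nat.lt_succ_iff.mp (Finset.mem_range.mp hj)
        rw [Nat.succ_sub hj', pow_succ, Matrix.mul_assoc _ _ B]
      rw [Finset.sum_congr rfl this, ← Finset.sum_mul, ← ih, pow_succ A (m + 1),
        pow_succ B (m + 1)]
      noncomm_ring
  have hleft : ((A - B) * (A ^ (m + 1) - B ^ (m + 1))).trace
      = ∑ a, ∑ b, ((Uᵀ * (A - B) * W) a b) ^ 2 *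
        ∑ j ∈ Finset.range (m + 1), x a ^ j * y b ^ (m - j) := by
    rw [htel, Finset.mul_sum, trace_sum]
    simp only [← Matrix.mul_assoc, hpow, Finset.mul_sum]
    rw [Finset.sum_comm]
    refine Finset.sum_congr rfl fun a _ => ?_
    rw [Finset.sum_comm]
  have hright : ((A - B) * (A - B) * (A ^ m + B ^ m)).trace
      = ∑ a, ∑ b, ((Uᵀ * (A - B) * W) a b) ^ 2 * (x a ^ m + y b ^ m) := by
    have h1 := hpow m 0
    have h2 := hpow 0 m
    simp only [pow_zero, mul_one, one_mul] at h1 h2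
    rw [Matrix.mul_add, trace_add, h2, Matrix.mul_assoc, trace_mul_comm, h1,
      ← Finset.sum_add_distrib]
    refine Finset.sum_congr rfl fun a _ => ?_
    rw [← Finset.sum_add_distrib]
    exact Finset.sum_congr rfl fun b _ => by ring
  rw [hleft, hright, Finset.mul_sum]
  refine Finset.sum_le_sum fun a _ => ?_
  rw [Finset.mul_sum]
  refine Finset.sum_le_sum fun b _ => ?_
  have := mul_le_mul_of_nonneg_left (sum_pow_mul_pow_le m hm (x a) (y b))
    (sq_nonneg ((Uᵀ * (A - B) * W) a b))
  linarith

/-- The real number `±1` attached to a sign. -/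
def signVal (u : ℤˣ) : ℝ := ((u : ℤ) : ℝ)

@[simp]
theorem signVal_one : signVal 1 = 1 := by simp [signVal]

@[simp]
theorem signVal_neg (u : ℤˣ) : signVal (-u) = -signVal u := by simp [signVal]

theorem signVal_mul_self (u : ℤˣ) : signVal u * signVal u = 1 := by
  rcases Int.units_eq_one_or u with h | h <;> simp [h]

/-- The signed sum `∑ ε_i B_i` of matrices. -/
def signedSum {ι κ : Type*} [Fintype ι] (B : ι → Matrix κ κ ℝ) (ε : ι → ℤˣ) : Matrix κ κ ℝ :=
  ∑ i, signVal (ε i) • B i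

theorem signedSum_isHermitian {ι κ : Type*} [Fintype ι] {B : ι → Matrix κ κ ℝ}
    (hB : ∀ i, (B i).IsHermitian) (ε : ι → ℤˣ) : (signedSum B ε).IsHermitian := by
  have hB' : ∀ i, (B i)ᵀ = B i := fun i => by
    have := hB i
    rwa [IsHermitian, conjTranspose_eq_transpose_of_trivial] at this
  rw [IsHermitian, conjTranspose_eq_transpose_of_trivial, signedSum, transpose_sum]
  simp only [transpose_smul, hB']

theorem signedSum_sub_flip {ι κ : Type*} [Fintype ι] [DecidableEq ι] (B : ι → Matrix κ κ ℝ)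
    (ε : ι → ℤˣ) (i : ι) :
    signedSum B ε - signedSum B (Pi.mulSingle i (-1) * ε) = (2 * signVal (ε i)) • B i := by
  rw [signedSum, signedSum, ← Finset.sum_sub_distrib, Finset.sum_eq_single i]
  · simp only [Pi.mul_apply, Pi.mulSingle_eq_same, neg_one_mul, signVal_neg]
    module
  · intro j _ hj
    simp [Pi.mulSingle_eq_of_ne hj]
  · simp

theorem sum_sign_trace_mul_pow_le {ι κ : Type*} [Fintype ι] [DecidableEq ι] [Fintype κ]
    [DecidableEq κ] {B : ι → Matrix κ κ ℝ} (hB : ∀ i, (B i).IsHermitian) (i : ι) (m : ℕ)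
    (hm : Even m) :
    ∑ ε : ι → ℤˣ, signVal (ε i) * (B i * signedSum B ε ^ (m + 1)).trace
      ≤ (m + 1) * ∑ ε : ι → ℤˣ, (B i * B i * signedSum B ε ^ m).trace := by
  have hflip : ∀ g : (ι → ℤˣ) → ℝ,
      ∑ ε : ι → ℤˣ, g (Pi.mulSingle i (-1) * ε) = ∑ ε, g ε := fun g =>
    Equiv.sum_comp (Equiv.mulLeft (Pi.mulSingle i (-1) : ι → ℤˣ)) g
  have hL : ∑ ε : ι → ℤˣ, signVal (ε i) * (B i * signedSum B ε ^ (m + 1)).trace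
      = ∑ ε : ι → ℤˣ, (1 / 4) * ((signedSum B ε - signedSum B (Pi.mulSingle i (-1) * ε)) *
        (signedSum B ε ^ (m + 1) - signedSum B (Pi.mulSingle i (-1) * ε) ^ (m + 1))).trace := by
    have h := hflip fun ε => signVal (ε i) * (B i * signedSum B ε ^ (m + 1)).trace
    simp only [Pi.mul_apply, Pi.mulSingle_eq_same, neg_one_mul, signVal_neg] at h
    simp only [signedSum_sub_flip, smul_mul, trace_smul, trace_sub, smul_eq_mul,
      mul_sub, Finset.sum_sub_distrib]
    rw [Finset.sum_congr rfl fun ε _ => neg_mul (signVal (ε i)) _, Finset.sum_neg_distrib] at h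
    simp only [mul_assoc, ← Finset.mul_sum]
    linarith
  have hR : (m + 1) * ∑ ε : ι → ℤˣ, (B i * B i * signedSum B ε ^ m).trace
      = ∑ ε : ι → ℤˣ, (1 / 4) * ((m + 1) / 2 *
        ((signedSum B ε - signedSum B (Pi.mulSingle i (-1) * ε)) *
        (signedSum B ε - signedSum B (Pi.mulSingle i (-1) * ε)) *
        (signedSum B ε ^ m + signedSum B (Pi.mulSingle i (-1) * ε) ^ m)).trace) := by
    have h := hflip fun ε => (B i * B i * signedSum B ε ^ m).trace
    have h2 : ∀ ε : ι → ℤˣ, 2 * signVal (ε i) * (2 * signVal (ε i)) = 4 := fun ε => by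
      linear_combination 4 * signVal_mul_self (ε i)
    simp only [signedSum_sub_flip, smul_mul, Matrix.mul_smul, smul_smul, h2, trace_smul, Matrix.mul_add,
      trace_add, smul_eq_mul, ← Finset.mul_sum, Finset.sum_add_distrib, h]
    ring
  rw [hL, hR]
  refine Finset.sum_le_sum fun ε _ => ?_
  exact mul_le_mul_of_nonneg_left (trace_sub_mul_pow_sub_pow_le (signedSum_isHermitian hB _)
    (signedSum_isHermitian hB _) m hm) (by norm_num)

theorem posSemidef_pow_of_even {κ : Type*} [Fintype κ] [DecidableEq κ] {A : Matrix κ κ ℝ}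
    (hA : A.IsHermitian) (p : ℕ) : (A ^ (2 * p)).PosSemidef := by
  have := posSemidef_conjTranspose_mul_self (A ^ p)
  rwa [conjTranspose_pow, hA.eq, ← pow_add, ← two_mul] at this

/-- The noncommutative Khintchine inequality for even moments, with uniformly bounded variance. -/
theorem sum_trace_signedSum_pow_le {ι κ : Type*} [Fintype ι] [DecidableEq ι] [Fintype κ]
    [DecidableEq κ] {B : ι → Matrix κ κ ℝ} (hB : ∀ i, (B i).IsHermitian) {σ : ℝ}
    (hσ : 0 ≤ σ) (hV : (σ • (1 : Matrix κ κ ℝ) - ∑ i, B i * B i).PosSemidef) (p : ℕ) :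
    ∑ ε : ι → ℤˣ, (signedSum B ε ^ (2 * p)).trace
      ≤ (2 * p).factorial / (2 ^ p * p.factorial) * σ ^ p * Fintype.card κ *
        Fintype.card (ι → ℤˣ) := by
  induction p with
  | zero => simp [mul_comm]
  | succ p ih =>
    have hexp : ∀ ε : ι → ℤˣ, (signedSum B ε ^ (2 * (p + 1))).trace
        = ∑ i, signVal (ε i) * (B i * signedSum B ε ^ (2 * p + 1)).trace := by
      intro ε
      rw [show 2 * (p + 1) = (2 * p + 1) + 1 by ring, pow_succ']
      nth_rewrite 1 [signedSum]
      rw [Finset.sum_mul, trace_sum]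
      simp only [smul_mul, trace_smul, smul_eq_mul]
    have h1 : ∑ ε : ι → ℤˣ, (signedSum B ε ^ (2 * (p + 1))).trace
        ≤ (2 * p + 1) * ∑ ε : ι → ℤˣ, ((∑ i, B i * B i) * signedSum B ε ^ (2 * p)).trace := by
      simp only [hexp, Finset.sum_mul, trace_sum]
      rw [Finset.sum_comm, Finset.sum_comm (s := Finset.univ (α := ι → ℤˣ)) (t := Finset.univ),
        Finset.mul_sum]
      refine Finset.sum_le_sum fun i _ => ?_
      have := sum_sign_trace_mul_pow_le hB i (2 * p) (even_two_mul p)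
      push_cast at this
      exact this
    have h2 : ∀ ε : ι → ℤˣ, ((∑ i, B i * B i) * signedSum B ε ^ (2 * p)).trace
        ≤ σ * (signedSum B ε ^ (2 * p)).trace := by
      intro ε
      have := trace_mul_nonneg_of_posSemidef hV
        (posSemidef_pow_of_even (signedSum_isHermitian hB ε) p)
      rw [Matrix.sub_mul, trace_sub, smul_mul, Matrix.one_mul, trace_smul, smul_eq_mul] at this
      linarith
    have h3 := Finset.sum_le_sum fun ε (_ : ε ∈ Finset.univ) => h2 ε
    rw [← Finset.mul_sum] at h3
    have h4 : (2 * ((p : ℝ) + 1)) ≠ 0 := by positivity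
    calc ∑ ε : ι → ℤˣ, (signedSum B ε ^ (2 * (p + 1))).trace
        ≤ (2 * p + 1) * (σ * ((2 * p).factorial / (2 ^ p * p.factorial) * σ ^ p *
          Fintype.card κ * Fintype.card (ι → ℤˣ))) := by
          refine h1.trans (mul_le_mul_of_nonneg_left (h3.trans ?_) (by positivity))
          exact mul_le_mul_of_nonneg_left ih hσ
      _ = _ := by
          rw [show 2 * (p + 1) = (2 * p + 1) + 1 by ring, Nat.factorial_succ, Nat.factorial_succ,
            Nat.factorial_succ]
          push_cast
          field_simp
          ring

theorem exists_pow_le_trace_of_not_posSemidef {κ : Type*} [Fintype κ] [DecidableEq κ]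
    {A : Matrix κ κ ℝ} (hA : A.IsHermitian) {c : ℝ}
    (h : ¬ (c • (1 : Matrix κ κ ℝ) - A ^ 2).PosSemidef) :
    ∃ x : ℝ, c < x ^ 2 ∧ ∀ p, x ^ (2 * p) ≤ (A ^ (2 * p)).trace := by
  obtain ⟨U, d, hU, hU', hAU⟩ := exists_orthogonal_diagonalization hA
  by_contra! hcon
  apply h
  have hle : ∀ i, d i ^ 2 ≤ c := by
    intro i
    by_contra! hi
    obtain ⟨p, hp⟩ := hcon (d i) hi
    rw [hAU, orthogonal_conj_diagonal_pow _ hU hU', trace_orthogonal_conj_diagonal _ hU] at hp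
    refine absurd hp (not_lt.mpr ?_)
    exact Finset.single_le_sum (f := fun i => d i ^ (2 * p))
      (fun j _ => (even_two_mul p).pow_nonneg _) (Finset.mem_univ i)
  have : c • (1 : Matrix κ κ ℝ) - A ^ 2 = U * diagonal (fun i => c - d i ^ 2) * Uᴴ := by
    rw [hAU, orthogonal_conj_diagonal_pow _ hU hU', conjTranspose_eq_transpose_of_trivial,
      ← diagonal_sub, Matrix.mul_sub, Matrix.sub_mul]
    congr 1
    rw [← smul_one_eq_diagonal, Matrix.mul_smul, smul_mul, Matrix.mul_one, hU']
  rw [this]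
  refine PosSemidef.mul_mul_conjTranspose_same (PosSemidef.diagonal fun i => ?_) U
  exact sub_nonneg.mpr (hle i)

open Classical in
/-- Tail bound for the spectral norm of a Rademacher matrix series. -/
theorem card_not_posSemidef_signedSum_le {ι κ : Type*} [Fintype ι] [DecidableEq ι] [Fintype κ]
    [DecidableEq κ] {B : ι → Matrix κ κ ℝ} (hB : ∀ i, (B i).IsHermitian) {σ : ℝ}
    (hσ : 0 ≤ σ) (hV : (σ • (1 : Matrix κ κ ℝ) - ∑ i, B i * B i).PosSemidef)
    {r : ℝ} (hr : 0 ≤ r) :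
    ((Finset.univ.filter fun ε : ι → ℤˣ =>
      ¬ ((r * σ) • (1 : Matrix κ κ ℝ) - signedSum B ε ^ 2).PosSemidef).card : ℝ)
      ≤ 2 * Fintype.card κ * Real.exp (-(r / 2)) * Fintype.card (ι → ℤˣ) := by
  set bad := Finset.univ.filter fun ε : ι → ℤˣ =>
      ¬ ((r * σ) • (1 : Matrix κ κ ℝ) - signedSum B ε ^ 2).PosSemidef with hbad
  have hx : ∀ ε : ι → ℤˣ, ∃ x : ℝ, ε ∈ bad →
      r * σ < x ^ 2 ∧ ∀ p, x ^ (2 * p) ≤ (signedSum B ε ^ (2 * p)).trace := by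
    intro ε
    by_cases hε : ε ∈ bad
    · obtain ⟨x, hx⟩ := exists_pow_le_trace_of_not_posSemidef (signedSum_isHermitian hB ε)
        (Finset.mem_filter.mp hε).2
      exact ⟨x, fun _ => hx⟩
    · exact ⟨0, fun h => absurd h hε⟩
  choose x hx using hx
  have hmom : ∀ p : ℕ, ∑ ε ∈ bad, x ε ^ (2 * p)
      ≤ (2 * p).factorial / (2 ^ p * p.factorial) * σ ^ p * Fintype.card κ *
        Fintype.card (ι → ℤˣ) := by
    intro p
    refine le_trans ?_ (sum_trace_signedSum_pow_le hB hσ hV p)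
    refine (Finset.sum_le_sum fun ε hε => (hx ε hε).2 p).trans ?_
    exact Finset.sum_le_sum_of_subset_of_nonneg (Finset.subset_univ _) fun ε _ _ =>
      (posSemidef_pow_of_even (signedSum_isHermitian hB ε) p).trace_nonneg
  rcases hσ.eq_or_lt with rfl | hσ
  · have hempty : bad = ∅ := by
      by_contra hne
      obtain ⟨ε, hε⟩ := Finset.nonempty_iff_ne_empty.mpr hne
      have h1 := hmom 1
      have h2 := Finset.single_le_sum (f := fun ε => x ε ^ (2 * 1))
        (fun j _ => (even_two_mul 1).pow_nonneg _) hε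
      have h3 := (hx ε hε).1
      simp only [mul_one, pow_one, mul_zero, zero_mul] at h1 h2 h3
      linarith
    rw [hempty, Finset.card_empty, Nat.cast_zero]
    positivity
  set θ := √(r / σ) with hθ
  have hθσ : θ ^ 2 * σ = r := by
    rw [hθ, Real.sq_sqrt (by positivity)]
    field_simp
  have hsum1 : HasSum (fun p : ℕ => ∑ ε ∈ bad, (θ * x ε) ^ (2 * p) / (2 * p).factorial)
      (∑ ε ∈ bad, Real.cosh (θ * x ε)) :=
    hasSum_sum fun ε _ => Real.hasSum_cosh _
  have hsum2 : HasSum (fun p : ℕ => (Fintype.card κ * Fintype.card (ι → ℤˣ) : ℝ) *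
      ((r / 2) ^ p / p.factorial))
      ((Fintype.card κ * Fintype.card (ι → ℤˣ) : ℝ) * Real.exp (r / 2)) := by
    refine HasSum.mul_left _ ?_
    rw [Real.exp_eq_exp_ℝ]
    exact NormedSpace.expSeries_div_hasSum_exp (r / 2)
  have hle : ∑ ε ∈ bad, Real.cosh (θ * x ε)
      ≤ (Fintype.card κ * Fintype.card (ι → ℤˣ) : ℝ) * Real.exp (r / 2) := by
    refine hasSum_le (fun p => ?_) hsum1 hsum2
    have hfac : (0 : ℝ) < (2 * p).factorial := by positivity
    calc ∑ ε ∈ bad, (θ * x ε) ^ (2 * p) / (2 * p).factorial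
        = θ ^ (2 * p) / (2 * p).factorial * ∑ ε ∈ bad, x ε ^ (2 * p) := by
          rw [Finset.mul_sum]
          exact Finset.sum_congr rfl fun ε _ => by rw [mul_pow]; ring
      _ ≤ θ ^ (2 * p) / (2 * p).factorial *
          ((2 * p).factorial / (2 ^ p * p.factorial) * σ ^ p * Fintype.card κ *
          Fintype.card (ι → ℤˣ)) :=
          mul_le_mul_of_nonneg_left (hmom p) (by positivity)
      _ = _ := by
          rw [pow_mul, div_pow, ← hθσ, mul_pow]
          field_simp
  have hge : ∀ ε ∈ bad, Real.exp r / 2 ≤ Real.cosh (θ * x ε) := by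
    intro ε hε
    have h1 : r ≤ |θ * x ε| := by
      have h2 : r ^ 2 ≤ (θ * x ε) ^ 2 := by
        rw [mul_pow]
        have := mul_le_mul_of_nonneg_left (hx ε hε).1.le (sq_nonneg θ)
        calc r ^ 2 = θ ^ 2 * (r * σ) := by linear_combination (-r) * hθσ
          _ ≤ _ := this
      exact (abs_of_nonneg hr) ▸ sq_le_sq.mp h2
    rw [← Real.cosh_abs, Real.cosh_eq]
    have := Real.exp_le_exp.mpr h1
    have := Real.exp_pos (-|θ * x ε|)
    linarith
  have hcard := (Finset.card_nsmul_le_sum bad _ _ hge).trans hle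
  rw [nsmul_eq_mul] at hcard
  have hsplit : Real.exp (r / 2) * Real.exp (r / 2) = Real.exp r := by
    rw [← Real.exp_add]; ring_nf
  have hinv : Real.exp (-(r / 2)) * Real.exp (r / 2) = 1 := by
    rw [← Real.exp_add]; simp
  refine le_of_mul_le_mul_right ?_ (Real.exp_pos r)
  calc (bad.card : ℝ) * Real.exp r = 2 * (bad.card * (Real.exp r / 2)) := by ring
    _ ≤ 2 * ((Fintype.card κ * Fintype.card (ι → ℤˣ) : ℝ) * Real.exp (r / 2)) := by linarith
    _ = _ := by
      rw [← hsplit]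
      linear_combination (-2 * (Fintype.card κ * Fintype.card (ι → ℤˣ) : ℝ) *
        Real.exp (r / 2)) * hinv

theorem sum_sq_signedSum_le {ι : Type*} [Fintype ι] [DecidableEq ι] (a : ι → ℝ) :
    ∑ ε : ι → ℤˣ, (∑ i, signVal (ε i) * a i) ^ 2
      ≤ (∑ i, a i ^ 2) * Fintype.card (ι → ℤˣ) := by
  have h := sum_trace_signedSum_pow_le (B := fun i => diagonal fun _ : Unit => a i)
    (fun i => isHermitian_diagonal _) (σ := ∑ i, a i ^ 2)
    (Finset.sum_nonneg fun i _ => sq_nonneg _)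
    (by
      convert! PosSemidef.zero
      ext
      simp [Matrix.sum_apply, pow_two]) 1
  have hS : ∀ ε : ι → ℤˣ, (signedSum (fun i => diagonal fun _ : Unit => a i) ε ^ (2 * 1)).trace
      = (∑ i, signVal (ε i) * a i) ^ 2 := by
    intro ε
    simp [signedSum, pow_two, trace, Matrix.mul_apply, Matrix.sum_apply]
  simp only [hS] at h
  simpa using h

open Classical in
/-- Shifting a Rademacher sum by a number in `[-1, 1]` and cutting off at `1`. -/
theorem card_abs_add_signedSum_le_one {ι : Type*} [Fintype ι] [DecidableEq ι] (a : ι → ℝ)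
    {x v : ℝ} (hx : |x| ≤ 1) (hv : ∑ i, a i ^ 2 ≤ v) :
    (1 - v / (1 + |x|) ^ 2) / 2 * Fintype.card (ι → ℤˣ)
      ≤ ((Finset.univ.filter fun ε : ι → ℤˣ => |x + ∑ i, signVal (ε i) * a i| ≤ 1).card : ℝ) := by
  set S : (ι → ℤˣ) → ℝ := fun ε => ∑ i, signVal (ε i) * a i with hS
  have hneg : ∀ ε, S (-ε) = -S ε := fun ε => by simp [hS]
  set C := Finset.univ.filter fun ε : ι → ℤˣ => |S ε| ≤ 1 + |x|
  set G := Finset.univ.filter fun ε : ι → ℤˣ => |x + S ε| ≤ 1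
  have hsub : C ⊆ G ∪ G.map (Equiv.neg _).toEmbedding := by
    intro ε hε
    have h1 : |S ε| ≤ 1 + |x| := (Finset.mem_filter.mp hε).2
    rw [Finset.mem_union]
    rcases le_total (x * S ε) 0 with h | h
    · left
      refine Finset.mem_filter.mpr ⟨Finset.mem_univ _, ?_⟩
      rw [abs_le] at *
      rcases abs_cases x with h2 | h2 <;> constructor <;> nlinarith
    · right
      refine Finset.mem_map.mpr ⟨-ε, Finset.mem_filter.mpr ⟨Finset.mem_univ _, ?_⟩, by simp⟩
      rw [hneg]
      rw [abs_le] at *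
      rcases abs_cases x with h2 | h2 <;> constructor <;> nlinarith
  have hCG : (C.card : ℝ) ≤ 2 * G.card := by
    have h1 := (Finset.card_le_card hsub).trans (Finset.card_union_le _ _)
    rw [Finset.card_map] at h1
    exact_mod_cast h1.trans_eq (two_mul _).symm
  have hcheb : ((Finset.univ.filter fun ε : ι → ℤˣ => ¬ |S ε| ≤ 1 + |x|).card : ℝ) *
      (1 + |x|) ^ 2 ≤ v * Fintype.card (ι → ℤˣ) := by
    refine le_trans ?_ ((sum_sq_signedSum_le a).trans
      (mul_le_mul_of_nonneg_right hv (Nat.cast_nonneg _)))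
    rw [← nsmul_eq_mul]
    refine (Finset.card_nsmul_le_sum _ (fun ε => S ε ^ 2) _ fun ε hε => ?_).trans
      (Finset.sum_le_sum_of_subset_of_nonneg (Finset.subset_univ _) fun _ _ _ => sq_nonneg _)
    have h1 := not_le.mp (Finset.mem_filter.mp hε).2
    rw [← sq_abs (S ε)]
    exact pow_le_pow_left₀ (by positivity) h1.le 2
  have htot : (C.card : ℝ) + (Finset.univ.filter fun ε : ι → ℤˣ => ¬ |S ε| ≤ 1 + |x|).card
      = Fintype.card (ι → ℤˣ) := by
    exact_mod_cast Finset.card_filter_add_card_filter_not (s := Finset.univ)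
      fun ε : ι → ℤˣ => |S ε| ≤ 1 + |x|
  have hpos : 0 < (1 + |x|) ^ 2 := by positivity
  have hcheb' := (le_div_iff₀ hpos).mpr hcheb
  rw [mul_div_right_comm] at hcheb'
  linarith

theorem sum_insertNth_sign {N : ℕ} (i : Fin (N + 1)) (g : (Fin (N + 1) → ℤˣ) → ℝ) :
    ∑ ε, g ε = ∑ ε : Fin N → ℤˣ, g (i.insertNth 1 ε) + ∑ ε : Fin N → ℤˣ, g (i.insertNth (-1) ε) := by
  rw [← Equiv.sum_comp (Fin.insertNthEquiv (fun _ => ℤˣ) i) g, Fintype.sum_prod_type,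
    show (Finset.univ : Finset ℤˣ) = {1, -1} by decide, Finset.sum_pair (by decide)]
  rfl

open Classical in
theorem card_filter_insertNth_sign {N : ℕ} (i : Fin (N + 1)) (a : Fin (N + 1) → ℝ) (x : ℝ) :
    ((Finset.univ.filter fun ε : Fin (N + 1) → ℤˣ =>
      |x + ∑ j, signVal (ε j) * a j| ≤ 1).card : ℝ)
    = (Finset.univ.filter fun ε : Fin N → ℤˣ =>
        |x + a i + ∑ j, signVal (ε j) * a (i.succAbove j)| ≤ 1).card +
      (Finset.univ.filter fun ε : Fin N → ℤˣ =>
        |x - a i + ∑ j, signVal (ε j) * a (i.succAbove j)| ≤ 1).card := by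
  simp only [Finset.natCast_card_filter]
  rw [sum_insertNth_sign i]
  simp [Fin.sum_univ_succAbove _ i, add_assoc, sub_eq_add_neg]

theorem card_signs_succ (N : ℕ) :
    (Fintype.card (Fin (N + 1) → ℤˣ) : ℝ) = 2 * Fintype.card (Fin N → ℤˣ) := by
  simp [pow_succ, mul_comm]

open Classical in
/-- Rademacher sums with small coefficients, started inside `[-2/3, 2/3]`. -/
theorem card_abs_add_signedSum_of_small {N : ℕ} (a : Fin N → ℝ) {x : ℝ} (hx : |x| ≤ 2 / 3)
    (ha : ∀ i, |a i| ≤ 1 / 3) (hsum : ∑ i, a i ^ 2 ≤ 1) :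
    (8 / 25 : ℝ) * Fintype.card (Fin N → ℤˣ)
      ≤ ((Finset.univ.filter fun ε : Fin N → ℤˣ =>
        |x + ∑ i, signVal (ε i) * a i| ≤ 1).card : ℝ) := by
  induction N generalizing x with
  | zero =>
    have : |x| ≤ 1 := by linarith
    simp [this]
    norm_num
  | succ N ih =>
    have hsum' : ∑ i : Fin N, a ((0 : Fin (N + 1)).succAbove i) ^ 2 ≤ 1 := by
      rw [Fin.sum_univ_succAbove _ 0] at hsum
      have := sq_nonneg (a 0)
      linarith
    have hstep : ∀ y : ℝ, |y| ≤ 1 → (8 / 25 : ℝ) * Fintype.card (Fin N → ℤˣ)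
        ≤ ((Finset.univ.filter fun ε : Fin N → ℤˣ =>
          |y + ∑ i, signVal (ε i) * a ((0 : Fin (N + 1)).succAbove i)| ≤ 1).card : ℝ) := by
      intro y hy
      by_cases h : |y| ≤ 2 / 3
      · exact ih _ h (fun i => ha _) hsum'
      · push Not at h
        refine le_trans (mul_le_mul_of_nonneg_right ?_ (Nat.cast_nonneg _))
          (card_abs_add_signedSum_le_one _ hy hsum')
        have h1 : 1 / (1 + |y|) ^ 2 ≤ 9 / 25 := by
          rw [div_le_iff₀ (by positivity)]
          nlinarith
        linarith
    rw [card_filter_insertNth_sign 0, card_signs_succ]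
    have h0 := ha 0
    have h1 := hstep (x + a 0) ((abs_add_le _ _).trans (by linarith))
    have h2 := hstep (x - a 0) ((abs_sub _ _).trans (by linarith))
    linarith

open Classical in
theorem card_abs_signedSum_fin {N : ℕ} (a : Fin N → ℝ) (hsum : ∑ i, a i ^ 2 ≤ 1) :
    (1 / 4 : ℝ) * Fintype.card (Fin N → ℤˣ)
      < ((Finset.univ.filter fun ε : Fin N → ℤˣ =>
        |∑ i, signVal (ε i) * a i| ≤ 1).card : ℝ) := by
  have hcard : (0 : ℝ) < Fintype.card (Fin N → ℤˣ) := by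
    exact_mod_cast Fintype.card_pos
  by_cases ha : ∀ i, |a i| ≤ 1 / 3
  · have := card_abs_add_signedSum_of_small a (x := 0) (by norm_num) ha hsum
    simp only [zero_add] at this
    linarith
  push Not at ha
  obtain ⟨i, hi⟩ := ha
  obtain _ | N := N
  · exact i.elim0
  have h := card_filter_insertNth_sign i a 0
  simp only [zero_add, zero_sub] at h
  rw [Fin.sum_univ_succAbove _ i] at hsum
  have hsum' : ∑ j, a (i.succAbove j) ^ 2 ≤ 1 - |a i| ^ 2 := by
    rw [sq_abs]; linarith
  have hai : |a i| ≤ 1 := by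
    have : ∑ j, a (i.succAbove j) ^ 2 ≥ 0 := Finset.sum_nonneg fun _ _ => sq_nonneg _
    exact abs_le_one_iff_mul_self_le_one.mpr (by nlinarith)
  have h1 := card_abs_add_signedSum_le_one _ hai hsum'
  have h2 := card_abs_add_signedSum_le_one (x := -a i) _ (by rwa [abs_neg]) hsum'
  rw [abs_neg] at h2
  have h3 : 1 / 4 < (1 - (1 - |a i| ^ 2) / (1 + |a i|) ^ 2) / 2 := by
    have : (1 - |a i| ^ 2) / (1 + |a i|) ^ 2 < 1 / 2 := by
      rw [div_lt_iff₀ (by positivity)]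
      nlinarith
    linarith
  rw [card_signs_succ] at hcard ⊢
  have h4 := mul_lt_mul_of_pos_right h3 (by linarith : (0 : ℝ) < Fintype.card (Fin N → ℤˣ))
  rw [h]
  linarith

open Classical in
/-- A Rademacher sum of variance at most one lies in `[-1, 1]` with probability more than
one quarter. -/
theorem card_abs_signedSum_le_one {ι : Type*} [Fintype ι] [DecidableEq ι] (a : ι → ℝ)
    (hsum : ∑ i, a i ^ 2 ≤ 1) :
    (1 / 4 : ℝ) * Fintype.card (ι → ℤˣ)
      < ((Finset.univ.filter fun ε : ι → ℤˣ => |∑ i, signVal (ε i) * a i| ≤ 1).card : ℝ) := by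
  set e := (Fintype.equivFin ι).symm
  have h := card_abs_signedSum_fin (fun i => a (e i))
    (by rwa [Equiv.sum_comp e fun i => a i ^ 2])
  rw [Finset.natCast_card_filter, Fintype.card_congr (Equiv.arrowCongr e (Equiv.refl ℤˣ)),
    ← Equiv.sum_comp (Equiv.arrowCongr e.symm (Equiv.refl ℤˣ))] at h
  rw [Finset.natCast_card_filter]
  convert! h using 4 with ε
  rw [← Equiv.sum_comp e]
  simp [Equiv.arrowCongr]

/-- The matrix `∑ V_ij S_i S_j`. -/
def varMat {nb fk : ℕ} (Sm : Fin nb → Matrix (Fin fk) (Fin fk) ℝ) (V : Matrix (Fin nb) (Fin nb) ℝ) :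
    Matrix (Fin fk) (Fin fk) ℝ :=
  ∑ i, ∑ j, V i j • (Sm i * Sm j)

theorem trace_calSstar_mul {nb fk : ℕ} (Sm : Fin nb → Matrix (Fin fk) (Fin fk) ℝ)
    (Λ : Matrix (Fin fk) (Fin fk) ℝ) {V : Matrix (Fin nb) (Fin nb) ℝ} (hV : V.IsSymm) :
    (calSstar Sm Λ * V).trace = (Λ * varMat Sm V).trace := by
  have h1 : (calSstar Sm Λ * V).trace
      = (1 / 2) * ∑ i, ∑ j, V i j * (Λ * (Sm i * Sm j)).trace
        + (1 / 2) * ∑ i, ∑ j, V i j * (Λ * (Sm j * Sm i)).trace := by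
    simp only [trace, diag_apply, Matrix.mul_apply (M := calSstar Sm Λ)]
    rw [Finset.mul_sum, Finset.mul_sum, ← Finset.sum_add_distrib]
    refine Finset.sum_congr rfl fun i _ => ?_
    rw [Finset.mul_sum, Finset.mul_sum, ← Finset.sum_add_distrib]
    refine Finset.sum_congr rfl fun j _ => ?_
    rw [hV.apply i j]
    simp only [calSstar, of_apply, Matrix.mul_smul, trace_smul, Matrix.mul_add, trace_add,
      smul_eq_mul]
    simp only [trace, diag_apply]
    ring
  have h2 : ∑ i, ∑ j, V i j * (Λ * (Sm j * Sm i)).trace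
      = ∑ i, ∑ j, V i j * (Λ * (Sm i * Sm j)).trace := by
    rw [Finset.sum_comm]
    exact Finset.sum_congr rfl fun i _ => Finset.sum_congr rfl fun j _ => by rw [hV.apply]
  rw [h1, h2]
  simp only [varMat, Finset.mul_sum, trace_sum, Matrix.mul_smul, trace_smul, smul_eq_mul]
  rw [← Finset.sum_add_distrib]
  refine Finset.sum_congr rfl fun i _ => ?_
  rw [← Finset.sum_add_distrib]
  exact Finset.sum_congr rfl fun j _ => by ring

theorem varMat_vecMulVec {nb fk : ℕ} (Sm : Fin nb → Matrix (Fin fk) (Fin fk) ℝ) (z : Fin nb → ℝ) :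
    varMat Sm (vecMulVec z z) = (∑ i, z i • Sm i) ^ 2 := by
  rw [pow_two, Finset.sum_mul_sum, varMat]
  refine Finset.sum_congr rfl fun i _ => Finset.sum_congr rfl fun j _ => ?_
  rw [vecMulVec_apply, smul_mul, Matrix.mul_smul, smul_smul]

theorem varMat_mul_transpose {nb fk : ℕ} {ι : Type*} [Fintype ι]
    (Sm : Fin nb → Matrix (Fin fk) (Fin fk) ℝ) (X : Matrix (Fin nb) ι ℝ) :
    varMat Sm (X * Xᵀ) = ∑ j, (∑ i, X i j • Sm i) * (∑ i, X i j • Sm i) := by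
  simp only [varMat, Matrix.mul_apply, transpose_apply, Finset.sum_smul, Finset.sum_mul_sum,
    smul_mul, Matrix.mul_smul, smul_smul]
  rw [Finset.sum_comm (s := Finset.univ (α := ι))]
  refine Finset.sum_congr rfl fun i _ => ?_
  rw [Finset.sum_comm]
  exact Finset.sum_congr rfl fun j _ => Finset.sum_congr rfl fun l _ => by rw [mul_comm]

theorem isHermitian_sum_smul {nb fk : ℕ} {Sm : Fin nb → Matrix (Fin fk) (Fin fk) ℝ}
    (hSm : ∀ i, (Sm i).IsSymm) (z : Fin nb → ℝ) : (∑ i, z i • Sm i).IsHermitian := by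
  rw [IsHermitian, conjTranspose_eq_transpose_of_trivial, transpose_sum]
  exact Finset.sum_congr rfl fun i _ => by rw [transpose_smul, (hSm i).eq]

theorem varMat_posSemidef {nb fk : ℕ} {Sm : Fin nb → Matrix (Fin fk) (Fin fk) ℝ}
    (hSm : ∀ i, (Sm i).IsSymm) {V : Matrix (Fin nb) (Fin nb) ℝ} (hV : V.PosSemidef) :
    (varMat Sm V).PosSemidef := by
  obtain ⟨R, rfl⟩ := exists_eq_mul_transpose_of_posSemidef hV
  rw [varMat_mul_transpose]
  refine posSemidef_sum _ fun j _ => ?_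
  have := posSemidef_conjTranspose_mul_self (∑ i, R i j • Sm i)
  rwa [(isHermitian_sum_smul hSm fun i => R i j).eq] at this

theorem dotProduct_mulVec_eq_trace {ι : Type*} [Fintype ι] (M : Matrix ι ι ℝ) (x : ι → ℝ) :
    x ⬝ᵥ M *ᵥ x = (M * vecMulVec x x).trace := by
  rw [mul_vecMulVec, trace_vecMulVec, dotProduct_comm]

theorem trace_blockDiagOne_mul {m : ℕ} (D : Matrix (Fin m) (Fin m) ℝ) (μ : ℝ)
    (Y : Matrix (Fin m ⊕ Unit) (Fin m ⊕ Unit) ℝ) :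
    (blockDiagOne D μ * Y).trace = (D * Y.toBlocks₁₁).trace + μ * Y (Sum.inr ()) (Sum.inr ()) := by
  simp [trace, Matrix.mul_apply, Fintype.sum_sum_type, blockDiagOne, toBlocks₁₁]

/-- The matrix `BlockDiag(∑ 𝒮_k^*[Λ_k], μ)`. -/
def dualMat {nb K : ℕ} {f : Fin K → ℕ}
    (Smat : (k : Fin K) → Fin nb → Matrix (Fin (f k)) (Fin (f k)) ℝ)
    (Λ : (k : Fin K) → Matrix (Fin (f k)) (Fin (f k)) ℝ) (μ : ℝ) :
    Matrix (Fin nb ⊕ Unit) (Fin nb ⊕ Unit) ℝ :=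
  blockDiagOne (∑ k, calSstar (Smat k) (Λ k)) μ

section dualMat

variable {nb K : ℕ} {f : Fin K → ℕ}
  (Smat : (k : Fin K) → Fin nb → Matrix (Fin (f k)) (Fin (f k)) ℝ)

theorem trace_dualMat_mul (Λ : (k : Fin K) → Matrix (Fin (f k)) (Fin (f k)) ℝ) (μ : ℝ)
    {Y : Matrix (Fin nb ⊕ Unit) (Fin nb ⊕ Unit) ℝ} (hY : Y.IsSymm) :
    (dualMat Smat Λ μ * Y).trace
      = ∑ k, (Λ k * varMat (Smat k) Y.toBlocks₁₁).trace + μ * Y (Sum.inr ()) (Sum.inr ()) := by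
  have hV : Y.toBlocks₁₁.IsSymm := by
    ext i j
    exact hY.apply _ _
  rw [dualMat, trace_blockDiagOne_mul, Finset.sum_mul, trace_sum]
  simp only [trace_calSstar_mul _ _ hV]

theorem dotProduct_dualMat_mulVec (Λ : (k : Fin K) → Matrix (Fin (f k)) (Fin (f k)) ℝ) (μ : ℝ)
    (x : Fin nb ⊕ Unit → ℝ) :
    x ⬝ᵥ dualMat Smat Λ μ *ᵥ x
      = ∑ k, (Λ k * (∑ i, x (Sum.inl i) • Smat k i) ^ 2).trace + μ * x (Sum.inr ()) ^ 2 := by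
  rw [dotProduct_mulVec_eq_trace, trace_dualMat_mul]
  · simp only [← varMat_vecMulVec]
    rw [pow_two]
    rfl
  · ext i j
    simp [vecMulVec_apply, mul_comm]

theorem dualMat_add (Λ Λ' : (k : Fin K) → Matrix (Fin (f k)) (Fin (f k)) ℝ) (μ μ' : ℝ) :
    dualMat Smat (Λ + Λ') (μ + μ') = dualMat Smat Λ μ + dualMat Smat Λ' μ' := by
  ext (i | i) (j | j) <;>
    simp [dualMat, blockDiagOne, Matrix.sum_apply, calSstar, Matrix.add_mul, Finset.sum_add_distrib]

theorem dualMat_smul (c : ℝ) (Λ : (k : Fin K) → Matrix (Fin (f k)) (Fin (f k)) ℝ) (μ : ℝ) :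
    dualMat Smat (c • Λ) (c * μ) = c • dualMat Smat Λ μ := by
  ext (i | i) (j | j) <;>
    simp [dualMat, blockDiagOne, Matrix.sum_apply, calSstar, Finset.mul_sum]

theorem dualMat_isSymm (Λ : (k : Fin K) → Matrix (Fin (f k)) (Fin (f k)) ℝ) (μ : ℝ) :
    (dualMat Smat Λ μ).IsSymm := by
  ext (i | i) (j | j) <;>
    simp [dualMat, blockDiagOne, Matrix.sum_apply, calSstar, add_comm]

end dualMat

/-- Positivity of the quadratic form of a not necessarily symmetric matrix is an open condition. -/
theorem isOpen_setOf_form_pos {ι : Type*} [Fintype ι] :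
    IsOpen {N : Matrix ι ι ℝ | ∀ x : ι → ℝ, x ≠ 0 → 0 < x ⬝ᵥ N *ᵥ x} := by
  have hset : {N : Matrix ι ι ℝ | ∀ x : ι → ℝ, x ≠ 0 → 0 < x ⬝ᵥ N *ᵥ x}
      = {N | ∀ x ∈ Metric.sphere (0 : ι → ℝ) 1, 0 < x ⬝ᵥ N *ᵥ x} := by
    ext N
    refine ⟨fun h x hx => h x (ne_zero_of_mem_unit_sphere (⟨x, hx⟩ : Metric.sphere (0 : ι → ℝ) 1)),
      fun h x hx => ?_⟩
    have hn : 0 < ‖x‖ := norm_pos_iff.mpr hx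
    have h1 := h (‖x‖⁻¹ • x) (by simp [norm_smul, hn.ne'])
    rw [mulVec_smul, dotProduct_smul, smul_dotProduct, smul_eq_mul, smul_eq_mul] at h1
    exact pos_of_mul_pos_right (pos_of_mul_pos_right h1 (by positivity)) (by positivity)
  rw [hset, isOpen_iff_mem_nhds]
  intro N hN
  refine (isCompact_sphere (0 : ι → ℝ) 1).eventually_forall_of_forall_eventually
    (P := fun N x => 0 < x ⬝ᵥ N *ᵥ x) fun x hx => ?_
  have hc : Continuous fun p : Matrix ι ι ℝ × (ι → ℝ) => p.2 ⬝ᵥ p.1 *ᵥ p.2 :=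
    continuous_snd.dotProduct (continuous_fst.matrix_mulVec continuous_snd)
  exact (isOpen_lt continuous_const hc).mem_nhds (hN x hx)

/-- Strict feasibility of the semidefinite relaxation. -/
theorem exists_strictly_feasible {nb K : ℕ} {f : Fin K → ℕ}
    (Smat : (k : Fin K) → Fin nb → Matrix (Fin (f k)) (Fin (f k)) ℝ)
    (hSm : ∀ k i, (Smat k i).IsSymm)
    (hnd : ∀ z : Fin nb → ℝ, (∀ k, (∑ i, z i • Smat k i) = 0) → z = 0)
    (Q : Matrix (Fin nb ⊕ Unit) (Fin nb ⊕ Unit) ℝ) :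
    ∃ (Λ : (k : Fin K) → Matrix (Fin (f k)) (Fin (f k)) ℝ) (μ : ℝ),
      (∀ k, (Λ k).PosSemidef) ∧ 0 ≤ μ ∧
      ∀ x : Fin nb ⊕ Unit → ℝ, x ≠ 0 → 0 < x ⬝ᵥ (dualMat Smat Λ μ - Q) *ᵥ x := by
  set H := dualMat Smat (fun _ => 1) 1 with hH
  have hpos : ∀ x : Fin nb ⊕ Unit → ℝ, x ≠ 0 → 0 < x ⬝ᵥ H *ᵥ x := by
    intro x hx
    rw [hH, dotProduct_dualMat_mulVec]
    simp only [one_mul]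
    have hk : ∀ k, 0 ≤ ((∑ i, x (Sum.inl i) • Smat k i) ^ 2).trace := fun k =>
      (posSemidef_pow_of_even (isHermitian_sum_smul (hSm k) _) 1).trace_nonneg
    by_contra! hle
    have h1 := Finset.sum_nonneg fun k (_ : k ∈ Finset.univ) => hk k
    have h2 := sq_nonneg (x (Sum.inr ()))
    have h3 : x (Sum.inr ()) = 0 := pow_eq_zero_iff two_ne_zero |>.mp (by linarith)
    have h4 := (Finset.sum_eq_zero_iff_of_nonneg fun k (_ : k ∈ Finset.univ) => hk k).mp
      (by linarith)
    have h5 := hnd (fun i => x (Sum.inl i)) fun k => by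
      have h6 := h4 k (Finset.mem_univ k)
      have hherm := isHermitian_sum_smul (hSm k) fun i => x (Sum.inl i)
      rw [pow_two] at h6
      nth_rewrite 1 [← hherm.eq] at h6
      exact trace_conjTranspose_mul_self_eq_zero_iff.mp h6
    apply hx
    ext (i | i)
    · exact congrFun h5 i
    · exact h3
  have hcont : Continuous fun e : ℝ => H - e • Q := by fun_prop
  have hev := hcont.continuousAt.eventually_mem (x := 0)
    (isOpen_setOf_form_pos.mem_nhds (by simpa using hpos))
  obtain ⟨e, he, hepos⟩ :=
    ((hev.filter_mono nhdsWithin_le_nhds).and (self_mem_nhdsWithin (s := Set.Ioi (0 : ℝ)))).exists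
  have hepos' : (0 : ℝ) < e := hepos
  set Λ : (k : Fin K) → Matrix (Fin (f k)) (Fin (f k)) ℝ := fun _ => 1
  refine ⟨e⁻¹ • Λ, e⁻¹ * 1, fun k => PosSemidef.one.smul (inv_pos.mpr hepos').le,
    by positivity, fun x hx => ?_⟩
  have h1 : dualMat Smat (e⁻¹ • Λ) (e⁻¹ * 1) - Q = e⁻¹ • (H - e • Q) := by
    rw [dualMat_smul, smul_sub, smul_smul, inv_mul_cancel₀ hepos'.ne', one_smul]
  rw [h1, smul_mulVec, dotProduct_smul, smul_eq_mul]
  exact mul_pos (inv_pos.mpr hepos') (he x hx)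

section suppFn

variable {K : ℕ} {T : Set (Fin K → ℝ)}

theorem bddAbove_suppFn (hT : IsCompact T) (lam : Fin K → ℝ) :
    BddAbove ((fun t => ∑ k, lam k * t k) '' T) :=
  (hT.image (by fun_prop)).bddAbove

theorem le_suppFn (hT : IsCompact T) (lam : Fin K → ℝ) {t : Fin K → ℝ} (ht : t ∈ T) :
    ∑ k, lam k * t k ≤ suppFn T lam :=
  le_csSup (bddAbove_suppFn hT lam) ⟨t, ht, rfl⟩

theorem suppFn_le (hne : T.Nonempty) {lam : Fin K → ℝ} {c : ℝ}
    (h : ∀ t ∈ T, ∑ k, lam k * t k ≤ c) : suppFn T lam ≤ c :=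
  csSup_le (hne.image _) (by rintro _ ⟨t, ht, rfl⟩; exact h t ht)

theorem suppFn_smul_le (hT : IsCompact T) (hne : T.Nonempty) (lam : Fin K → ℝ) {c : ℝ}
    (hc : 0 ≤ c) : suppFn T (c • lam) ≤ c * suppFn T lam := by
  refine suppFn_le hne fun t ht => ?_
  have := mul_le_mul_of_nonneg_left (le_suppFn hT lam ht) hc
  simpa [Finset.mul_sum, mul_assoc] using this

theorem suppFn_add_le (hT : IsCompact T) (hne : T.Nonempty) (lam lam' : Fin K → ℝ) :
    suppFn T (lam + lam') ≤ suppFn T lam + suppFn T lam' := by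
  refine suppFn_le hne fun t ht => ?_
  have := add_le_add (le_suppFn hT lam ht) (le_suppFn hT lam' ht)
  simpa [add_mul, Finset.sum_add_distrib] using this

theorem suppFn_lamOf_nonneg (hT : IsCompact T) (hne : T.Nonempty) (hpos : ∀ t ∈ T, ∀ k, 0 ≤ t k)
    {f : Fin K → ℕ} {Λ : (k : Fin K) → Matrix (Fin (f k)) (Fin (f k)) ℝ}
    (hΛ : ∀ k, (Λ k).PosSemidef) : 0 ≤ suppFn T (lamOf Λ) := by
  obtain ⟨t, ht⟩ := hne
  exact (Finset.sum_nonneg fun k _ => mul_nonneg (hΛ k).trace_nonneg (hpos t ht k)).trans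
    (le_suppFn hT _ ht)

/-- A nonnegative vector dominated by the support function of a monotone convex compact set
in all nonnegative directions belongs to the set. -/
theorem mem_of_forall_le_suppFn (hne : T.Nonempty) (hconv : Convex ℝ T) (hT : IsCompact T)
    (hmono : ∀ t t' : Fin K → ℝ, (∀ k, 0 ≤ t k) → (∀ k, t k ≤ t' k) → t' ∈ T → t ∈ T)
    (hpos : ∀ t ∈ T, ∀ k, 0 ≤ t k) {t : Fin K → ℝ} (ht : ∀ k, 0 ≤ t k)
    (h : ∀ lam : Fin K → ℝ, (∀ k, 0 ≤ lam k) → ∑ k, lam k * t k ≤ suppFn T lam) : t ∈ T := by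
  by_contra hmem
  obtain ⟨g, u, hg, hu⟩ := geometric_hahn_banach_closed_point hconv hT.isClosed hmem
  set lam : Fin K → ℝ := fun k => g (Pi.single k 1) with hlam
  have hgl : ∀ y : Fin K → ℝ, g y = ∑ k, lam k * y k := by
    intro y
    conv_lhs => rw [pi_eq_sum_univ' y, map_sum]
    refine Finset.sum_congr rfl fun k _ => ?_
    rw [map_smul, smul_eq_mul, mul_comm, hlam]
  have h1 := h (fun k => max (lam k) 0) fun k => le_max_right _ _
  have h2 : suppFn T (fun k => max (lam k) 0) ≤ u := by
    refine suppFn_le hne fun y hy => ?_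
    set y' : Fin K → ℝ := fun k => if 0 ≤ lam k then y k else 0 with hy'
    have hy'T : y' ∈ T := by
      refine hmono y' y (fun k => ?_) (fun k => ?_) hy
      · rw [hy']; dsimp only; split_ifs
        · exact hpos y hy k
        · exact le_rfl
      · rw [hy']; dsimp only; split_ifs
        · exact le_rfl
        · exact hpos y hy k
    have h3 := (hg y' hy'T).le
    rw [hgl] at h3
    refine le_trans (le_of_eq (Finset.sum_congr rfl fun k _ => ?_)) h3
    rw [hy']; dsimp only; split_ifs with hk
    · rw [max_eq_left hk]
    · rw [max_eq_right (not_le.mp hk).le]; simp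
  have h3 : g t ≤ ∑ k, max (lam k) 0 * t k := by
    rw [hgl]
    exact Finset.sum_le_sum fun k _ => mul_le_mul_of_nonneg_right (le_max_left _ _) (ht k)
  linarith

end suppFn

theorem exists_trace_eq_max_eigenvalue {κ : Type*} [Fintype κ] [DecidableEq κ] [Nonempty κ]
    {A : Matrix κ κ ℝ} (hA : A.IsHermitian) :
    ∃ (m : ℝ) (E : Matrix κ κ ℝ), E.PosSemidef ∧ E.trace = 1 ∧ (E * A).trace = m ∧
      (m • (1 : Matrix κ κ ℝ) - A).PosSemidef := by
  obtain ⟨U, d, hU, hU', hAU⟩ := exists_orthogonal_diagonalization hA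
  obtain ⟨i, hi⟩ := Finite.exists_max d
  refine ⟨d i, U * diagonal (Pi.single i 1) * Uᵀ, ?_, ?_, ?_, ?_⟩
  · rw [← conjTranspose_eq_transpose_of_trivial]
    refine PosSemidef.mul_mul_conjTranspose_same (PosSemidef.diagonal fun j => ?_) U
    by_cases h : j = i
    · subst h; simp
    · simp [Pi.single_eq_of_ne h]
  · rw [trace_orthogonal_conj_diagonal _ hU]
    simp
  · have : U * diagonal (Pi.single i 1) * Uᵀ * A
        = U * diagonal (fun j => (Pi.single i 1 : κ → ℝ) j * d j) * Uᵀ := by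
      rw [hAU, ← diagonal_mul_diagonal]
      calc U * diagonal (Pi.single i 1) * Uᵀ * (U * diagonal d * Uᵀ)
          = U * diagonal (Pi.single i 1) * (Uᵀ * U) * diagonal d * Uᵀ := by
            simp only [Matrix.mul_assoc]
        _ = _ := by rw [hU, Matrix.mul_one]; simp only [Matrix.mul_assoc]
    rw [this, trace_orthogonal_conj_diagonal _ hU]
    simp [Pi.single_apply]
  · have : d i • (1 : Matrix κ κ ℝ) - A = U * diagonal (fun j => d i - d j) * Uᴴ := by
      rw [hAU, conjTranspose_eq_transpose_of_trivial,
        ← diagonal_sub, Matrix.mul_sub, Matrix.sub_mul]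
      congr 1
      rw [← smul_one_eq_diagonal, Matrix.mul_smul, smul_mul, Matrix.mul_one, hU']
    rw [this]
    refine PosSemidef.mul_mul_conjTranspose_same (PosSemidef.diagonal fun j => ?_) U
    exact sub_nonneg.mpr (hi j)

theorem nonneg_of_forall_pos_mul_add {a b : ℝ} (h : ∀ δ : ℝ, 0 < δ → 0 ≤ a + δ * b) :
    0 ≤ a ∧ 0 ≤ b := by
  constructor
  · by_contra! ha
    have h1 := h (-a / (2 * (|b| + 1))) (by apply div_pos <;> [linarith; positivity])
    have h2 : -a / (2 * (|b| + 1)) * b ≤ -a / (2 * (|b| + 1)) * (|b| + 1) :=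
      mul_le_mul_of_nonneg_left (by linarith [le_abs_self b])
        (by apply div_nonneg <;> [linarith; positivity])
    have h3 : -a / (2 * (|b| + 1)) * (|b| + 1) = -a / 2 := by field_simp
    linarith
  · by_contra! hb
    have h1 := h ((|a| + 1) / -b) (by apply div_pos <;> [positivity; linarith])
    have h2 : (|a| + 1) / -b * b = -(|a| + 1) := by
      have := hb.ne
      field_simp
    linarith [le_abs_self a]

/-- Conic duality for the semidefinite relaxation: a lower bound on the optimal value is certified
by a dual feasible pair. -/
theorem exists_dual_certificate {nb K : ℕ} {f : Fin K → ℕ} (hf : ∀ k, 1 ≤ f k)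
    (Smat : (k : Fin K) → Fin nb → Matrix (Fin (f k)) (Fin (f k)) ℝ)
    (hSm : ∀ k i, (Smat k i).IsSymm)
    (hnd : ∀ z : Fin nb → ℝ, (∀ k, (∑ i, z i • Smat k i) = 0) → z = 0)
    {T : Set (Fin K → ℝ)}
    (hTne : T.Nonempty) (hTconv : Convex ℝ T) (hTcomp : IsCompact T)
    (hTnonneg : ∀ t ∈ T, ∀ k, 0 ≤ t k)
    (hTmono : ∀ t t' : Fin K → ℝ, (∀ k, 0 ≤ t k) → (∀ k, t k ≤ t' k) → t' ∈ T → t ∈ T)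
    {Q : Matrix (Fin nb ⊕ Unit) (Fin nb ⊕ Unit) ℝ} (hQ : Q.IsSymm) {s : ℝ} (hs : 0 < s) {c : ℝ}
    (hc : ∀ (Λ : (k : Fin K) → Matrix (Fin (f k)) (Fin (f k)) ℝ) (μ : ℝ),
      (∀ k, (Λ k).PosSemidef) → 0 ≤ μ → (dualMat Smat Λ μ - Q).PosSemidef →
      c ≤ s * suppFn T (lamOf Λ) + μ) :
    ∃ Y : Matrix (Fin nb ⊕ Unit) (Fin nb ⊕ Unit) ℝ, ∃ t ∈ T, Y.PosSemidef ∧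
      Y (Sum.inr ()) (Sum.inr ()) ≤ 1 ∧ c ≤ (Q * Y).trace ∧
      ∀ k, ((s * t k) • (1 : Matrix (Fin (f k)) (Fin (f k)) ℝ)
        - varMat (Smat k) Y.toBlocks₁₁).PosSemidef := by
  set C : Set (Matrix (Fin nb ⊕ Unit) (Fin nb ⊕ Unit) ℝ × ℝ) :=
    {p | ∃ (Λ : (k : Fin K) → Matrix (Fin (f k)) (Fin (f k)) ℝ) (μ : ℝ),
      ((∀ k, (Λ k).PosSemidef) ∧ 0 ≤ μ) ∧
      (∀ x : Fin nb ⊕ Unit → ℝ, x ≠ 0 → 0 < x ⬝ᵥ (dualMat Smat Λ μ - Q - p.1) *ᵥ x) ∧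
      s * suppFn T (lamOf Λ) + μ < p.2} with hC
  have hCopen : IsOpen C := by
    have : C = ⋃ (Λ : (k : Fin K) → Matrix (Fin (f k)) (Fin (f k)) ℝ), ⋃ (μ : ℝ),
        ⋃ (_ : (∀ k, (Λ k).PosSemidef) ∧ 0 ≤ μ),
        {p | (∀ x : Fin nb ⊕ Unit → ℝ, x ≠ 0 → 0 < x ⬝ᵥ (dualMat Smat Λ μ - Q - p.1) *ᵥ x) ∧
          s * suppFn T (lamOf Λ) + μ < p.2} := by
      ext p
      simp only [hC, Set.mem_ofPred_eq, Set.mem_iUnion, exists_prop]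
    rw [this]
    refine isOpen_iUnion fun Λ => isOpen_iUnion fun μ => isOpen_iUnion fun _ => ?_
    refine IsOpen.and ?_ (isOpen_lt continuous_const continuous_snd)
    have hcont : Continuous fun p : Matrix (Fin nb ⊕ Unit) (Fin nb ⊕ Unit) ℝ × ℝ =>
        dualMat Smat Λ μ - Q - p.1 := by fun_prop
    exact isOpen_setOf_form_pos.preimage hcont
  have hCconv : Convex ℝ C := by
    rintro p ⟨Λ, μ, ⟨hΛ, hμ⟩, hform, hval⟩ p' ⟨Λ', μ', ⟨hΛ', hμ'⟩, hform', hval'⟩ a b ha hb hab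
    refine ⟨a • Λ + b • Λ', a * μ + b * μ', ⟨fun k => ((hΛ k).smul ha).add ((hΛ' k).smul hb),
      by positivity⟩, fun x hx => ?_, ?_⟩
    · have heq : dualMat Smat (a • Λ + b • Λ') (a * μ + b * μ') - Q - (a • p + b • p').1
          = a • (dualMat Smat Λ μ - Q - p.1) + b • (dualMat Smat Λ' μ' - Q - p'.1) := by
        have hQ' : Q = a • Q + b • Q := by rw [← add_smul, hab, one_smul]
        rw [dualMat_add, dualMat_smul, dualMat_smul, Prod.fst_add, Prod.smul_fst, Prod.smul_fst]
        nth_rewrite 1 [hQ']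
        module
      rw [heq, add_mulVec, smul_mulVec, smul_mulVec, dotProduct_add, dotProduct_smul,
        dotProduct_smul, smul_eq_mul, smul_eq_mul]
      have h1 := hform x hx
      have h2 := hform' x hx
      rcases ha.eq_or_lt with rfl | ha
      · have : b = 1 := by linarith
        subst this
        linarith
      · have := mul_pos ha h1
        have := mul_nonneg hb h2.le
        linarith
    · have hl : lamOf (a • Λ + b • Λ') = a • lamOf Λ + b • lamOf Λ' := by
        ext k
        simp [lamOf]
      have h1 := suppFn_add_le hTcomp hTne (a • lamOf Λ) (b • lamOf Λ')
      have h2 := suppFn_smul_le hTcomp hTne (lamOf Λ) ha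
      have h3 := suppFn_smul_le hTcomp hTne (lamOf Λ') hb
      have h4 : s * suppFn T (lamOf (a • Λ + b • Λ'))
          ≤ s * (a * suppFn T (lamOf Λ) + b * suppFn T (lamOf Λ')) := by
        rw [hl]
        exact mul_le_mul_of_nonneg_left (by linarith) hs.le
      have h5 : a * (s * suppFn T (lamOf Λ) + μ) + b * (s * suppFn T (lamOf Λ') + μ')
          < a * p.2 + b * p'.2 := by
        rcases ha.eq_or_lt with rfl | ha
        · have : b = 1 := by linarith
          subst this
          linarith
        · have := mul_lt_mul_of_pos_left hval ha
          have := mul_le_mul_of_nonneg_left hval'.le hb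
          linarith
      rw [Prod.snd_add, Prod.smul_snd, Prod.smul_snd, smul_eq_mul, smul_eq_mul]
      linarith
  have hnot : ((0, c) : Matrix (Fin nb ⊕ Unit) (Fin nb ⊕ Unit) ℝ × ℝ) ∉ C := by
    rintro ⟨Λ, μ, ⟨hΛ, hμ⟩, hform, hval⟩
    refine absurd hval (not_lt.mpr (hc Λ μ hΛ hμ (.of_dotProduct_mulVec_nonneg ?_ fun x => ?_)))
    · rw [IsHermitian, conjTranspose_eq_transpose_of_trivial]
      exact ((dualMat_isSymm Smat Λ μ).sub hQ).eq
    · rw [star_trivial]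
      by_cases hx : x = 0
      · simp [hx]
      · simpa using (hform x hx).le
  obtain ⟨g, hg⟩ := geometric_hahn_banach_open_point hCconv hCopen hnot
  set ρ := g (0, 1) with hρ
  have hgsplit : ∀ (M : Matrix (Fin nb ⊕ Unit) (Fin nb ⊕ Unit) ℝ) (v : ℝ),
      g (M, v) = g (M, 0) + ρ * v := by
    intro M v
    rw [hρ, mul_comm, ← smul_eq_mul, ← map_smul, ← map_add]
    simp
  have hg0 : g ((0 : Matrix (Fin nb ⊕ Unit) (Fin nb ⊕ Unit) ℝ), (0 : ℝ)) = 0 := map_zero g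
  have hρneg : ρ < 0 := by
    obtain ⟨Λ, μ, hΛ, hμ, hform⟩ := exists_strictly_feasible Smat hSm hnd Q
    set v := max (s * suppFn T (lamOf Λ) + μ) c + 1
    have hv1 : s * suppFn T (lamOf Λ) + μ < v := (le_max_left _ _).trans_lt (lt_add_one _)
    have hv2 : c < v := (le_max_right _ _).trans_lt (lt_add_one _)
    have h1 := hg (0, v) ⟨Λ, μ, ⟨hΛ, hμ⟩, by simpa using hform, hv1⟩
    rw [hgsplit 0 v, hgsplit 0 c, hg0] at h1
    nlinarith
  set Y : Matrix (Fin nb ⊕ Unit) (Fin nb ⊕ Unit) ℝ :=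
    of fun j i => g (single i j 1, 0) / (-ρ) with hY
  have htr : ∀ M : Matrix (Fin nb ⊕ Unit) (Fin nb ⊕ Unit) ℝ,
      g (M, 0) = (-ρ) * (M * Y).trace := by
    intro M
    let gl : Matrix (Fin nb ⊕ Unit) (Fin nb ⊕ Unit) ℝ →ₗ[ℝ] ℝ :=
      g.toLinearMap ∘ₗ LinearMap.inl ℝ _ ℝ
    have hgl : ∀ N, gl N = g (N, 0) := fun N => rfl
    rw [← hgl, matrix_eq_sum_single M, map_sum]
    rw [← matrix_eq_sum_single M]
    simp only [map_sum, trace, diag_apply, Matrix.mul_apply, Finset.mul_sum]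
    refine Finset.sum_congr rfl fun i _ => Finset.sum_congr rfl fun j _ => ?_
    have : single i j (M i j) = M i j • (single i j 1 : Matrix _ _ ℝ) := by simp
    rw [this, map_smul, hgl, smul_eq_mul, hY, of_apply]
    have := hρneg.ne
    field_simp
  have hmain : ∀ (Λ : (k : Fin K) → Matrix (Fin (f k)) (Fin (f k)) ℝ) (μ : ℝ)
      (N : Matrix (Fin nb ⊕ Unit) (Fin nb ⊕ Unit) ℝ), (∀ k, (Λ k).PosSemidef) → 0 ≤ μ →
      (∀ x, 0 ≤ x ⬝ᵥ N *ᵥ x) →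
      0 ≤ s * suppFn T (lamOf Λ) + μ - c - (dualMat Smat Λ μ * Y).trace + (Q * Y).trace
        + (N * Y).trace := by
    intro Λ μ N hΛ hμ hN
    refine (nonneg_of_forall_pos_mul_add (b := 1 + Y.trace) fun δ hδ => ?_).1
    have h1 := hg (dualMat Smat Λ μ - Q - N - δ • 1, s * suppFn T (lamOf Λ) + μ + δ)
      ⟨Λ, μ, ⟨hΛ, hμ⟩, fun x hx => ?_, by simpa using hδ⟩
    · rw [hgsplit, hgsplit 0 c, hg0, htr] at h1
      simp only [Matrix.sub_mul, trace_sub, smul_mul, trace_smul, Matrix.one_mul, smul_eq_mul] at h1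
      have h2 : 0 < -ρ * (s * suppFn T (lamOf Λ) + μ - c - (dualMat Smat Λ μ * Y).trace
        + (Q * Y).trace + (N * Y).trace + δ * (1 + Y.trace)) := by linarith
      exact (pos_of_mul_pos_right h2 (by linarith)).le
    · have heq : dualMat Smat Λ μ - Q - (dualMat Smat Λ μ - Q - N - δ • 1) = N + δ • 1 := by abel
      rw [heq, add_mulVec, smul_mulVec, one_mulVec, dotProduct_add, dotProduct_smul, smul_eq_mul]
      have h2 : 0 < x ⬝ᵥ x := by
        have := dotProduct_star_self_pos_iff.mpr hx
        rwa [star_trivial] at this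
      have := mul_pos hδ h2
      have := hN x
      linarith
  have hd0 : dualMat Smat (0 : (k : Fin K) → Matrix (Fin (f k)) (Fin (f k)) ℝ) 0 = 0 := by
    have := dualMat_smul Smat 0 0 0
    simpa using this
  have hsupp0 : suppFn T (lamOf (0 : (k : Fin K) → Matrix (Fin (f k)) (Fin (f k)) ℝ)) ≤ 0 :=
    suppFn_le hTne fun t _ => by simp [lamOf]
  have hN : ∀ N : Matrix (Fin nb ⊕ Unit) (Fin nb ⊕ Unit) ℝ, (∀ x, 0 ≤ x ⬝ᵥ N *ᵥ x) →
      0 ≤ -c + (Q * Y).trace ∧ 0 ≤ (N * Y).trace := by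
    intro N hNx
    refine nonneg_of_forall_pos_mul_add fun δ hδ => ?_
    have h1 := hmain 0 0 (δ • N) (fun k => PosSemidef.zero) le_rfl fun x => by
      rw [smul_mulVec, dotProduct_smul, smul_eq_mul]
      exact mul_nonneg hδ.le (hNx x)
    rw [hd0, Matrix.zero_mul, trace_zero, smul_mul, trace_smul, smul_eq_mul] at h1
    nlinarith
  have hYsymm : Y.IsSymm := by
    ext i j
    have hform0 : ∀ x : Fin nb ⊕ Unit → ℝ,
        x ⬝ᵥ (single i j (1 : ℝ) - single j i 1) *ᵥ x = 0 := by
      intro x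
      rw [sub_mulVec, dotProduct_sub, dotProduct_mulVec_eq_trace, dotProduct_mulVec_eq_trace,
        trace_single_mul, trace_single_mul]
      simp [vecMulVec_apply, mul_comm]
    have h1 := (hN (single i j 1 - single j i 1) fun x => (hform0 x).ge).2
    have h2 := (hN (-(single i j 1 - single j i 1)) fun x => by
      rw [neg_mulVec, dotProduct_neg, hform0, neg_zero]).2
    rw [Matrix.neg_mul, trace_neg] at h2
    rw [Matrix.sub_mul, trace_sub, trace_single_mul, trace_single_mul] at h1 h2
    simp only [smul_eq_mul, one_mul] at h1 h2
    rw [transpose_apply]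
    linarith
  have hYpsd : Y.PosSemidef := by
    refine .of_dotProduct_mulVec_nonneg ?_ fun x => ?_
    · rw [IsHermitian, conjTranspose_eq_transpose_of_trivial]
      exact hYsymm.eq
    · rw [star_trivial, dotProduct_mulVec_eq_trace, trace_mul_comm]
      refine (hN (vecMulVec x x) fun y => ?_).2
      have := (posSemidef_vecMulVec_self_star x).dotProduct_mulVec_nonneg y
      simpa only [star_trivial] using this
  have hcQ : c ≤ (Q * Y).trace := by linarith [(hN 0 fun x => by simp).1]
  have hw : Y (Sum.inr ()) (Sum.inr ()) ≤ 1 := by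
    have := (nonneg_of_forall_pos_mul_add (a := -c + (Q * Y).trace)
      (b := 1 - Y (Sum.inr ()) (Sum.inr ())) fun δ hδ => ?_).2
    · linarith
    have h1 := hmain 0 δ 0 (fun k => PosSemidef.zero) hδ.le fun x => by simp
    rw [trace_dualMat_mul _ _ _ hYsymm] at h1
    simp only [Pi.zero_apply, Matrix.zero_mul, trace_zero, Finset.sum_const_zero] at h1
    nlinarith
  have hΛle : ∀ Λ : (k : Fin K) → Matrix (Fin (f k)) (Fin (f k)) ℝ, (∀ k, (Λ k).PosSemidef) →
      ∑ k, (Λ k * varMat (Smat k) Y.toBlocks₁₁).trace ≤ s * suppFn T (lamOf Λ) := by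
    intro Λ hΛ
    have := (nonneg_of_forall_pos_mul_add (a := -c + (Q * Y).trace)
      (b := s * suppFn T (lamOf Λ) - ∑ k, (Λ k * varMat (Smat k) Y.toBlocks₁₁).trace)
      fun δ hδ => ?_).2
    · linarith
    have h1 := hmain (δ • Λ) 0 0 (fun k => (hΛ k).smul hδ.le) le_rfl fun x => by simp
    rw [trace_dualMat_mul _ _ _ hYsymm] at h1
    simp only [Pi.smul_apply, Matrix.zero_mul, trace_zero, smul_mul, trace_smul, smul_eq_mul,
      ← Finset.mul_sum] at h1
    have hl : lamOf (δ • Λ) = δ • lamOf Λ := by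
      ext k
      simp [lamOf]
    have h2 := mul_le_mul_of_nonneg_left (suppFn_smul_le hTcomp hTne (lamOf Λ) hδ.le) hs.le
    rw [hl] at h1
    linarith
  have hV : Y.toBlocks₁₁.PosSemidef := hYpsd.submatrix Sum.inl
  have hSV : ∀ k, (varMat (Smat k) Y.toBlocks₁₁).PosSemidef := fun k => varMat_posSemidef (hSm k) hV
  have heig : ∀ k, ∃ (m : ℝ) (E : Matrix (Fin (f k)) (Fin (f k)) ℝ), E.PosSemidef ∧ E.trace = 1 ∧
      (E * varMat (Smat k) Y.toBlocks₁₁).trace = m ∧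
      (m • (1 : Matrix (Fin (f k)) (Fin (f k)) ℝ) - varMat (Smat k) Y.toBlocks₁₁).PosSemidef := by
    intro k
    have : Nonempty (Fin (f k)) := ⟨⟨0, hf k⟩⟩
    exact exists_trace_eq_max_eigenvalue (hSV k).1
  choose m E hE hEtr hEm hm using heig
  have hm0 : ∀ k, 0 ≤ m k := fun k => by
    rw [← hEm]
    exact trace_mul_nonneg_of_posSemidef (hE k) (hSV k)
  refine ⟨Y, fun k => m k / s, ?_, hYpsd, hw, hcQ, fun k => ?_⟩
  · refine mem_of_forall_le_suppFn hTne hTconv hTcomp hTmono hTnonneg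
      (fun k => div_nonneg (hm0 k) hs.le) fun lam hlam => ?_
    have h1 := hΛle (fun k => lam k • E k) fun k => (hE k).smul (hlam k)
    have hl : lamOf (fun k => lam k • E k) = lam := by
      ext k
      simp [lamOf, hEtr]
    simp only [smul_mul, trace_smul, smul_eq_mul, hEm, hl] at h1
    simp only [← mul_div_assoc, ← Finset.sum_div]
    rw [div_le_iff₀ hs]
    linarith
  · rw [mul_div_cancel₀ _ hs.ne']
    exact hm k

theorem mulVec_dotProduct_mulVec_mulVec {m n : Type*} [Fintype m] [Fintype n]
    (M : Matrix m n ℝ) (A : Matrix m m ℝ) (z : n → ℝ) :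
    (M *ᵥ z) ⬝ᵥ A *ᵥ (M *ᵥ z) = z ⬝ᵥ (Mᵀ * A * M) *ᵥ z := by
  rw [mulVec_mulVec, ← vecMul_transpose M z, ← dotProduct_mulVec, mulVec_mulVec, Matrix.mul_assoc]

/-- Rademacher rounding of a dual feasible pair. -/
theorem exists_rounding {nb K : ℕ} (hK : 1 ≤ K) {f : Fin K → ℕ} (hf : ∀ k, 1 ≤ f k)
    (Smat : (k : Fin K) → Fin nb → Matrix (Fin (f k)) (Fin (f k)) ℝ)
    (hSm : ∀ k i, (Smat k i).IsSymm)
    {Q Y : Matrix (Fin nb ⊕ Unit) (Fin nb ⊕ Unit) ℝ} (hQ : Q.IsSymm) (hY : Y.PosSemidef)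
    (hw : Y (Sum.inr ()) (Sum.inr ()) ≤ 1) {σ : Fin K → ℝ} (hσ : ∀ k, 0 ≤ σ k)
    (hV : ∀ k, (σ k • (1 : Matrix (Fin (f k)) (Fin (f k)) ℝ)
      - varMat (Smat k) Y.toBlocks₁₁).PosSemidef) :
    ∃ ξ : Fin nb ⊕ Unit → ℝ, ξ ⬝ᵥ Q *ᵥ ξ = (Q * Y).trace ∧ |ξ (Sum.inr ())| ≤ 1 ∧
      ∀ k, ((2 * Real.log (8 * ∑ k, (f k : ℝ)) * σ k) • (1 : Matrix (Fin (f k)) (Fin (f k)) ℝ)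
        - (∑ i, ξ (Sum.inl i) • Smat k i) ^ 2).PosSemidef := by
  classical
  obtain ⟨R, hR⟩ := exists_eq_mul_transpose_of_posSemidef hY
  have hherm : (Rᵀ * Q * R).IsHermitian := by
    rw [IsHermitian, conjTranspose_eq_transpose_of_trivial]
    simp only [transpose_mul, transpose_transpose, hQ.eq, Matrix.mul_assoc]
  obtain ⟨U, d, hU, hU', hdiag⟩ := exists_orthogonal_diagonalization hherm
  set X := R * U with hX
  have hXX : X * Xᵀ = Y := by
    rw [hX, transpose_mul, Matrix.mul_assoc, ← Matrix.mul_assoc U, hU', Matrix.one_mul, ← hR]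
  have hXQ : Xᵀ * Q * X = diagonal d := by
    calc Xᵀ * Q * X = Uᵀ * (Rᵀ * Q * R) * U := by
          rw [hX, transpose_mul]; simp only [Matrix.mul_assoc]
      _ = (Uᵀ * U) * diagonal d * (Uᵀ * U) := by
          rw [hdiag]; simp only [Matrix.mul_assoc]
      _ = _ := by rw [hU, Matrix.one_mul, Matrix.mul_one]
  have hform : ∀ ε : Fin nb ⊕ Unit → ℤˣ,
      (X *ᵥ fun j => signVal (ε j)) ⬝ᵥ Q *ᵥ (X *ᵥ fun j => signVal (ε j)) = (Q * Y).trace := by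
    intro ε
    rw [← hXX, ← Matrix.mul_assoc, trace_mul_comm, ← Matrix.mul_assoc, hXQ, trace_diagonal,
      mulVec_dotProduct_mulVec_mulVec, hXQ]
    simp only [dotProduct, mulVec_diagonal]
    exact Finset.sum_congr rfl fun j _ => by linear_combination d j * signVal_mul_self (ε j)
  have hgood := card_abs_signedSum_le_one (fun j => X (Sum.inr ()) j) (by
    rw [← hXX, Matrix.mul_apply] at hw
    simpa [pow_two] using hw)
  set F : ℝ := ∑ k, (f k : ℝ) with hF
  have hF1 : 1 ≤ F := by
    have h1 := Finset.single_le_sum (f := fun k => (f k : ℝ)) (fun k _ => Nat.cast_nonneg _)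
      (Finset.mem_univ (⟨0, hK⟩ : Fin K))
    have h2 : (1 : ℝ) ≤ f ⟨0, hK⟩ := by exact_mod_cast hf _
    exact h2.trans h1
  have hlog : 0 ≤ Real.log (8 * F) := Real.log_nonneg (by linarith)
  set r := 2 * Real.log (8 * F) with hr
  have hexp : Real.exp (-(r / 2)) = 1 / (8 * F) := by
    rw [hr, mul_div_cancel_left₀ _ two_ne_zero, Real.exp_neg, Real.exp_log (by linarith),
      one_div]
  set B : (k : Fin K) → Fin nb ⊕ Unit → Matrix (Fin (f k)) (Fin (f k)) ℝ :=
    fun k j => ∑ i, X (Sum.inl i) j • Smat k i with hB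
  have hBherm : ∀ k j, (B k j).IsHermitian := fun k j => isHermitian_sum_smul (hSm k) _
  have hBV : ∀ k, ∑ j, B k j * B k j = varMat (Smat k) Y.toBlocks₁₁ := by
    intro k
    have h1 : Y.toBlocks₁₁ = X.submatrix Sum.inl id * (X.submatrix Sum.inl id)ᵀ := by
      rw [← hXX]
      ext i j
      simp [toBlocks₁₁, Matrix.mul_apply]
    rw [h1, varMat_mul_transpose]
    rfl
  have hbad : ∀ k, ((Finset.univ.filter fun ε : Fin nb ⊕ Unit → ℤˣ =>
      ¬ ((r * σ k) • (1 : Matrix (Fin (f k)) (Fin (f k)) ℝ)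
        - signedSum (B k) ε ^ 2).PosSemidef).card : ℝ)
      ≤ f k * (1 / (4 * F) * Fintype.card (Fin nb ⊕ Unit → ℤˣ)) := by
    intro k
    have h1 := card_not_posSemidef_signedSum_le (hBherm k) (hσ k) (by rw [hBV]; exact hV k)
      (r := r) (by positivity)
    rw [hexp, Fintype.card_fin] at h1
    refine h1.trans_eq ?_
    field_simp
    ring
  obtain ⟨ε, hε1, hε2⟩ : ∃ ε : Fin nb ⊕ Unit → ℤˣ,
      |∑ j, signVal (ε j) * X (Sum.inr ()) j| ≤ 1 ∧
      ∀ k, ((r * σ k) • (1 : Matrix (Fin (f k)) (Fin (f k)) ℝ)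
        - signedSum (B k) ε ^ 2).PosSemidef := by
    by_contra! hcon
    have hsub : (Finset.univ.filter fun ε : Fin nb ⊕ Unit → ℤˣ =>
        |∑ j, signVal (ε j) * X (Sum.inr ()) j| ≤ 1) ⊆
        Finset.univ.biUnion fun k => Finset.univ.filter fun ε : Fin nb ⊕ Unit → ℤˣ =>
          ¬ ((r * σ k) • (1 : Matrix (Fin (f k)) (Fin (f k)) ℝ)
            - signedSum (B k) ε ^ 2).PosSemidef := by
      intro ε hε
      obtain ⟨k, hk⟩ := hcon ε (Finset.mem_filter.mp hε).2
      exact Finset.mem_biUnion.mpr ⟨k, Finset.mem_univ _,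
        Finset.mem_filter.mpr ⟨Finset.mem_univ _, hk⟩⟩
    have h1 : ((Finset.univ.filter fun ε : Fin nb ⊕ Unit → ℤˣ =>
        |∑ j, signVal (ε j) * X (Sum.inr ()) j| ≤ 1).card : ℝ)
        ≤ ∑ k, ((Finset.univ.filter fun ε : Fin nb ⊕ Unit → ℤˣ =>
          ¬ ((r * σ k) • (1 : Matrix (Fin (f k)) (Fin (f k)) ℝ)
            - signedSum (B k) ε ^ 2).PosSemidef).card : ℝ) := by
      exact_mod_cast (Finset.card_le_card hsub).trans Finset.card_biUnion_le
    have h2 := h1.trans (Finset.sum_le_sum fun k _ => hbad k)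
    rw [← Finset.sum_mul, ← hF] at h2
    have h3 : F * (1 / (4 * F) * (Fintype.card (Fin nb ⊕ Unit → ℤˣ) : ℝ))
        = 1 / 4 * Fintype.card (Fin nb ⊕ Unit → ℤˣ) := by
      field_simp
    linarith
  refine ⟨X *ᵥ fun j => signVal (ε j), hform ε, ?_, fun k => ?_⟩
  · simpa [mulVec, dotProduct, mul_comm] using hε1
  · have h1 : signedSum (B k) ε
        = ∑ i, (X *ᵥ fun j => signVal (ε j)) (Sum.inl i) • Smat k i := by
      simp only [signedSum, hB, Finset.smul_sum, smul_smul, mulVec, dotProduct, Finset.sum_smul]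
      rw [Finset.sum_comm]
      exact Finset.sum_congr rfl fun i _ => Finset.sum_congr rfl fun j _ => by rw [mul_comm]
    rw [← h1]
    exact hε2 k

theorem qPlus_isSymm {m : ℕ} {Q : Matrix (Fin m) (Fin m) ℝ} (hQ : Q.IsSymm) (q : Fin m → ℝ) :
    (qPlus Q q).IsSymm := by
  ext (i | i) (j | j) <;> simp [qPlus, hQ.apply]

theorem dotProduct_qPlus_mulVec {n m : ℕ} (P : Matrix (Fin n) (Fin m) ℝ)
    (A : Matrix (Fin n) (Fin n) ℝ) (b : Fin n → ℝ) (ξ : Fin m ⊕ Unit → ℝ) :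
    ξ ⬝ᵥ qPlus (Pᵀ * A * P) (Pᵀ *ᵥ b) *ᵥ ξ
      = (P *ᵥ (ξ ∘ Sum.inl)) ⬝ᵥ A *ᵥ (P *ᵥ (ξ ∘ Sum.inl))
        + 2 * (ξ (Sum.inr ()) * (b ⬝ᵥ P *ᵥ (ξ ∘ Sum.inl))) := by
  set z := ξ ∘ Sum.inl with hz
  have h2 : b ⬝ᵥ P *ᵥ z = (Pᵀ *ᵥ b) ⬝ᵥ z := by
    rw [dotProduct_mulVec, mulVec_transpose]
  rw [mulVec_dotProduct_mulVec_mulVec, h2]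
  simp only [dotProduct, mulVec, qPlus, Fintype.sum_sum_type, fromBlocks_apply₁₁,
    fromBlocks_apply₁₂, fromBlocks_apply₂₁, fromBlocks_apply₂₂, of_apply, Finset.univ_unique,
    Finset.sum_singleton, Matrix.zero_apply, zero_mul, mul_add, Finset.sum_add_distrib,
    hz, Function.comp_apply, PUnit.default_eq_unit]
  have h3 : ∑ i, ξ (Sum.inl i) * ((∑ x, Pᵀ i x * b x) * ξ (Sum.inr ()))
      = ξ (Sum.inr ()) * ∑ i, (∑ x, Pᵀ i x * b x) * ξ (Sum.inl i) := by
    rw [Finset.mul_sum]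
    exact Finset.sum_congr rfl fun i _ => by ring
  linarith
theorem stmt3 {n nb K : ℕ} (hK : 1 ≤ K)
    (P : Matrix (Fin n) (Fin nb) ℝ)
    (f : Fin K → ℕ) (hf : ∀ k, 1 ≤ f k)
    (Smat : (k : Fin K) → Fin nb → Matrix (Fin (f k)) (Fin (f k)) ℝ)
    (hSm : ∀ k i, (Smat k i).IsSymm)
    (hnd : ∀ z : Fin nb → ℝ, (∀ k, (∑ i, z i • Smat k i) = 0) → z = 0)
    (T : Set (Fin K → ℝ))
    (hTne : T.Nonempty) (hTconv : Convex ℝ T) (hTcomp : IsCompact T)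
    (hTnonneg : ∀ t ∈ T, ∀ k, 0 ≤ t k)
    (hTmono : ∀ t t' : Fin K → ℝ, (∀ k, 0 ≤ t k) → (∀ k, t k ≤ t' k) → t' ∈ T → t ∈ T)
    (hTpos : ∃ t ∈ T, ∀ k, 0 < t k)
    (A : Matrix (Fin n) (Fin n) ℝ) (hA : A.IsSymm) (b : Fin n → ℝ)
    (s : ℝ) (hs : 0 < s) :
    sInf {v : ℝ | ∃ Λ : (k : Fin K) → Matrix (Fin (f k)) (Fin (f k)) ℝ, ∃ μ : ℝ,
        (∀ k, (Λ k).PosSemidef) ∧ 0 ≤ μ ∧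
        (blockDiagOne (∑ k, calSstar (Smat k) (Λ k)) μ
          - qPlus (Pᵀ * A * P) (Pᵀ *ᵥ b)).PosSemidef ∧
        v = s * suppFn T (lamOf Λ) + μ} ≤
      sSup {v : ℝ | ∃ x ∈ spectratope f P Smat T (2 * Real.log (8 * (∑ k, (f k : ℝ))) * s),
        v = x ⬝ᵥ A *ᵥ x + 2 * (b ⬝ᵥ x)} := by
  have hQ : (qPlus (Pᵀ * A * P) (Pᵀ *ᵥ b)).IsSymm := by
    refine qPlus_isSymm ?_ _
    rw [IsSymm, transpose_mul, transpose_mul, transpose_transpose, hA.eq, Matrix.mul_assoc]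
  have hκ : 0 ≤ 2 * Real.log (8 * ∑ k, (f k : ℝ)) := by
    refine mul_nonneg zero_le_two ?_
    have h : (8 * ∑ k, (f k : ℝ)) = ((8 * ∑ k, f k : ℕ) : ℝ) := by push_cast; rfl
    rw [h]
    exact Real.log_natCast_nonneg _
  have hbdd : BddAbove {v : ℝ |
      ∃ x ∈ spectratope f P Smat T (2 * Real.log (8 * (∑ k, (f k : ℝ))) * s),
        v = x ⬝ᵥ A *ᵥ x + 2 * (b ⬝ᵥ x)} := by
    obtain ⟨Λ, μ, hΛ, -, hform⟩ := exists_strictly_feasible Smat hSm hnd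
      (qPlus (Pᵀ * A * P) (Pᵀ *ᵥ b))
    refine ⟨2 * Real.log (8 * (∑ k, (f k : ℝ))) * s * suppFn T (lamOf Λ) + μ, ?_⟩
    rintro _ ⟨_, ⟨z, t, ht, rfl, hz⟩, rfl⟩
    have h1 := hform (Sum.elim z fun _ => 1) fun h => by
      simpa using congrFun h (Sum.inr ())
    rw [sub_mulVec, dotProduct_sub, dotProduct_qPlus_mulVec, dotProduct_dualMat_mulVec] at h1
    simp only [Sum.elim_inl, Sum.elim_inr, Sum.elim_comp_inl, one_mul, one_pow, mul_one] at h1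
    have h2 : ∑ k, (Λ k * (∑ i, z i • Smat k i) ^ 2).trace
        ≤ 2 * Real.log (8 * (∑ k, (f k : ℝ))) * s * ∑ k, lamOf Λ k * t k := by
      rw [Finset.mul_sum]
      refine Finset.sum_le_sum fun k _ => ?_
      have h3 := trace_mul_nonneg_of_posSemidef (hΛ k) (hz k)
      rw [Matrix.mul_sub, trace_sub, Matrix.mul_smul, Matrix.mul_one, trace_smul,
        smul_eq_mul] at h3
      rw [lamOf]
      linarith
    have h4 := mul_le_mul_of_nonneg_left (le_suppFn hTcomp (lamOf Λ) ht) (mul_nonneg hκ hs.le)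
    linarith
  have hc : ∀ (Λ : (k : Fin K) → Matrix (Fin (f k)) (Fin (f k)) ℝ) (μ : ℝ),
      (∀ k, (Λ k).PosSemidef) → 0 ≤ μ →
      (dualMat Smat Λ μ - qPlus (Pᵀ * A * P) (Pᵀ *ᵥ b)).PosSemidef →
      sInf {v : ℝ | ∃ Λ : (k : Fin K) → Matrix (Fin (f k)) (Fin (f k)) ℝ, ∃ μ : ℝ,
        (∀ k, (Λ k).PosSemidef) ∧ 0 ≤ μ ∧
        (blockDiagOne (∑ k, calSstar (Smat k) (Λ k)) μ
          - qPlus (Pᵀ * A * P) (Pᵀ *ᵥ b)).PosSemidef ∧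
        v = s * suppFn T (lamOf Λ) + μ} ≤ s * suppFn T (lamOf Λ) + μ := by
    refine fun Λ μ hΛ hμ hfeas => csInf_le ⟨0, ?_⟩ ⟨Λ, μ, hΛ, hμ, hfeas, rfl⟩
    rintro _ ⟨Λ, μ, hΛ, hμ, -, rfl⟩
    exact add_nonneg (mul_nonneg hs.le (suppFn_lamOf_nonneg hTcomp hTne hTnonneg hΛ)) hμ
  obtain ⟨Y, t, ht, hY, hw, hval, hV⟩ := exists_dual_certificate hf Smat hSm hnd hTne hTconv hTcomp
    hTnonneg hTmono hQ hs hc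
  refine hval.trans ?_
  obtain ⟨ξ, hξ, hξ1, hξS⟩ := exists_rounding hK hf Smat hSm hQ hY hw
    (fun k => mul_nonneg hs.le (hTnonneg t ht k)) hV
  rw [← hξ, dotProduct_qPlus_mulVec]
  simp only [← mul_assoc _ s] at hξS
  set z : Fin nb → ℝ := ξ ∘ Sum.inl with hz
  have hmem : ∀ u : ℤˣ, P *ᵥ (signVal u • z)
      ∈ spectratope f P Smat T (2 * Real.log (8 * (∑ k, (f k : ℝ))) * s) := by
    refine fun u => ⟨signVal u • z, t, ht, rfl, fun k => ?_⟩
    have h1 : (∑ i, (signVal u • z) i • Smat k i) ^ 2 = (∑ i, ξ (Sum.inl i) • Smat k i) ^ 2 := by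
      simp only [Pi.smul_apply, smul_eq_mul, mul_smul, ← Finset.smul_sum, hz, Function.comp_apply]
      rw [smul_pow, pow_two (signVal u), signVal_mul_self, one_smul]
    rw [h1]
    exact hξS k
  have hle : ∀ u : ℤˣ, (P *ᵥ z) ⬝ᵥ A *ᵥ (P *ᵥ z) + 2 * (signVal u * (b ⬝ᵥ P *ᵥ z))
      ≤ sSup {v : ℝ | ∃ x ∈ spectratope f P Smat T (2 * Real.log (8 * (∑ k, (f k : ℝ))) * s),
        v = x ⬝ᵥ A *ᵥ x + 2 * (b ⬝ᵥ x)} := by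
    refine fun u => le_csSup hbdd ⟨_, hmem u, ?_⟩
    simp only [mulVec_smul, dotProduct_smul, smul_dotProduct, smul_eq_mul]
    rw [← mul_assoc (signVal u) (signVal u), signVal_mul_self, one_mul]
  have hp := hle 1
  have hm := hle (-1)
  simp only [signVal_one, signVal_neg] at hp hm
  rw [abs_le] at hξ1
  rcases le_total 0 (b ⬝ᵥ P *ᵥ z) with h | h
  · nlinarith
  · nlinarith
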